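/- arXiv:1008.0080 — 4 statements merged into one kernel-verified Lean document; each statement's English description precedes it below -/
import Mathlib

section
/- For all propositional formulas φ and ψ: the conjunction φ ∧ ψ is N-valid if and only if both φ is N-valid and ψ is N-valid. -/
/-! ## Dialogical logic: formulas, statements, moves -/

/-- Propositional formulas, built from atoms (indexed by `ℕ`) and `¬`, `∧`, `∨`, `→`. -/
inductive Formula : Type
  | atom : ℕ → Formula
  | neg : Formula → Formula
  | conj : Formula → Formula → Formula
  | disj : Formula → Formula → Formula
  | impl : Formula → Formula → Formula
  deriving DecidableEq, Inhabited

/-- Statements: formulas together with the three symbolic attacks `∧_L`, `∧_R` and `?`. -/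
inductive Statement : Type
  | form : Formula → Statement
  | conjL : Statement  -- the symbolic attack ∧_L
  | conjR : Statement  -- the symbolic attack ∧_R
  | question : Statement   -- the symbolic attack ?
  deriving DecidableEq, Inhabited

/-- A formula is atomic iff it is an atom. -/
def Formula.isAtomic : Formula → Prop
  | .atom _ => True
  | _ => False

/-- A move of a dialogue: a statement together with a reference.  The reference is
`none` for the initial move, `some (m, true)` for an attack on the assertion made at
move `m`, and `some (m, false)` for a defense against the attack made at move `m`. -/
structure Move : Type where
  stmt : Statement
  ref : Option (ℕ × Bool)
  deriving DecidableEq, Inhabited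

/-! ## Particle rules -/

/-- Particle rules, attacks: `Attacks a φ` holds when the statement `a` is an
admissible attack against the assertion `φ`. -/
inductive Attacks : Statement → Formula → Prop
  | conjL (φ ψ : Formula) : Attacks .conjL (.conj φ ψ)
  | conjR (φ ψ : Formula) : Attacks .conjR (.conj φ ψ)
  | disj (φ ψ : Formula) : Attacks .question (.disj φ ψ)
  | impl (φ ψ : Formula) : Attacks (.form φ) (.impl φ ψ)
  | neg (φ : Formula) : Attacks (.form φ) (.neg φ)

/-- Particle rules, defenses: `Defends s a φ` holds when the statement `s` is an
admissible defense of the assertion `φ` against the attack `a`.  (A negation admits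
no defense.) -/
inductive Defends : Statement → Statement → Formula → Prop
  | conjL (φ ψ : Formula) : Defends (.form φ) .conjL (.conj φ ψ)
  | conjR (φ ψ : Formula) : Defends (.form ψ) .conjR (.conj φ ψ)
  | disjL (φ ψ : Formula) : Defends (.form φ) .question (.disj φ ψ)
  | disjR (φ ψ : Formula) : Defends (.form ψ) .question (.disj φ ψ)
  | impl (φ ψ : Formula) : Defends (.form ψ) (.form φ) (.impl φ ψ)

/-! ## Dialogues

A (finite stage of a) dialogue is modelled as a list of moves; the move at index `i`
is the `i`-th move, made by Proponent P if `i` is even and by Opponent O if `i` is odd. -/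

/-- The skeletal dialogue conditions: move 0 is an assertion of a formula with no
reference, and every later move is an attack on, or a defense against, a specified
earlier move of the other player, in accordance with the particle rules; only
non-atomic assertions may be attacked. -/
def IsDialogue (d : List Move) : Prop :=
  (∀ _ : 0 < d.length, d[0]!.ref = none ∧ ∃ φ : Formula, d[0]!.stmt = .form φ) ∧
  (∀ i : ℕ, 0 < i → i < d.length →
    ∃ (m : ℕ) (z : Bool), d[i]!.ref = some (m, z) ∧ m < i ∧ m % 2 ≠ i % 2 ∧
      (z = true →
        ∃ φ : Formula, d[m]!.stmt = .form φ ∧ ¬ φ.isAtomic ∧ Attacks d[i]!.stmt φ) ∧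
      (z = false →
        ∃ (k : ℕ) (φ : Formula), d[m]!.ref = some (k, true) ∧ k < m ∧
          d[k]!.stmt = .form φ ∧ Defends d[i]!.stmt d[m]!.stmt φ))

/-- Rule D10: P may assert an atomic formula only if O has asserted it earlier. -/
def RuleD10 (d : List Move) : Prop :=
  ∀ i < d.length, i % 2 = 0 → ∀ a : ℕ, d[i]!.stmt = .form (.atom a) →
    ∃ j < i, j % 2 = 1 ∧ d[j]!.stmt = .form (.atom a)

/-- Rule D13: each P-assertion may be attacked at most once. -/
def RuleD13 (d : List Move) : Prop :=
  ∀ m : ℕ, m % 2 = 0 → ∀ i < d.length, ∀ j < d.length,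
    d[i]!.ref = some (m, true) → d[j]!.ref = some (m, true) → i = j

/-- Rule E: O may only react (attack or defend) against the immediately preceding
P-move. -/
def RuleE (d : List Move) : Prop :=
  ∀ i < d.length, i % 2 = 1 → ∃ z : Bool, d[i]!.ref = some (i - 1, z)

/-- The rule set N = {D10, D13}. -/
def NRules (d : List Move) : Prop := RuleD10 d ∧ RuleD13 d

/-- The rule set CL = {D10, D13, E}. -/
def CLRules (d : List Move) : Prop := RuleD10 d ∧ RuleD13 d ∧ RuleE d

/-- A dialogue commences with `φ` when its initial move is P's assertion of `φ`. -/
def CommencesWith (φ : Formula) (d : List Move) : Prop :=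
  0 < d.length ∧ d[0]!.stmt = .form φ

/-- An `S`-dialogue for `φ` (for a rule set `S`): a dialogue commencing with `φ`
that obeys the structural rules `S`.  These are exactly the branches (identified
with their underlying move sequences) of the `S`-dialogue tree for `φ`. -/
def SDialogueFor (S : List Move → Prop) (φ : Formula) (d : List Move) : Prop :=
  IsDialogue d ∧ S d ∧ CommencesWith φ d

/-- P wins a finite `S`-dialogue for `φ`: it ends with a P-move (the last index,
`d.length - 1`, is even, i.e. `d.length` is odd) and it cannot be extended by any
legal further (O-)move. -/
def WinsFor (S : List Move → Prop) (φ : Formula) (d : List Move) : Prop :=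
  SDialogueFor S φ d ∧ d.length % 2 = 1 ∧ ∀ m : Move, ¬ SDialogueFor S φ (d ++ [m])

/-- An `S`-winning strategy for P for `φ`, modelled as a set `T` of `S`-dialogues for
`φ`: the nodes of a rooted subtree of the `S`-dialogue tree for `φ`, each node being
identified with the dialogue leading from the root to it.  The conditions state that
`T` is a nonempty, prefix-closed set of `S`-dialogues for `φ` (hence a rooted subtree
of the `S`-dialogue tree with the same root), that every branch of `T` is a finite
`S`-dialogue won by P (leaves are wins for P, and there is no infinite branch), that
every node at odd depth (an O-move) has exactly one child, and that every node at
even depth (a P-move) has the same children in `T` as in the full dialogue tree. -/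
structure IsWinningStrategy (S : List Move → Prop) (φ : Formula) (T : Set (List Move)) : Prop where
  nonempty : T.Nonempty
  dialogues : ∀ d ∈ T, SDialogueFor S φ d
  prefix_closed : ∀ d ∈ T, ∀ e : List Move, e <+: d → 0 < e.length → e ∈ T
  leaf_wins : ∀ d ∈ T, (∀ m : Move, d ++ [m] ∉ T) → WinsFor S φ d
  no_infinite_branch : ∀ f : ℕ → Move, ∃ n : ℕ, 0 < n ∧ (List.ofFn fun i : Fin n => f i) ∉ T
  odd_unique_child : ∀ d ∈ T, 0 < d.length → d.length % 2 = 0 → ∃! m : Move, d ++ [m] ∈ T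
  even_all_children : ∀ d ∈ T, d.length % 2 = 1 →
    ∀ m : Move, SDialogueFor S φ (d ++ [m]) → d ++ [m] ∈ T

/-- `φ` is `S`-valid iff P has an `S`-winning strategy for `φ`. -/
def SValid (S : List Move → Prop) (φ : Formula) : Prop :=
  ∃ T : Set (List Move), IsWinningStrategy S φ T

/-- `φ` is N-valid (`⊨_N φ`) iff P has an N-winning strategy for `φ`. -/
def NValid (φ : Formula) : Prop := SValid NRules φ

namespace NDlg

theorem ga (l : List Move) (x : Move) {i : ℕ} (h : i < l.length) : (l ++ [x])[i]! = l[i]! := by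
  simp [List.getElem!_eq_getElem?_getD, List.getElem?_append_left h]

theorem gb (l : List Move) (x : Move) : (l ++ [x])[l.length]! = x := by
  simp

/-- Legality of extending the dialogue `d` by the move `m`. -/
def Ext (d : List Move) (m : Move) : Prop :=
  ∃ (k : ℕ) (z : Bool), m.ref = some (k, z) ∧ k < d.length ∧ k % 2 ≠ d.length % 2 ∧
    (z = true → ∃ φ : Formula, d[k]!.stmt = .form φ ∧ Attacks m.stmt φ) ∧
    (z = false → ∃ (k' : ℕ) (φ : Formula), d[k]!.ref = some (k', true) ∧ k' < k ∧
          d[k']!.stmt = .form φ ∧ Defends m.stmt d[k]!.stmt φ) ∧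
    (d.length % 2 = 0 → ∀ a : ℕ, m.stmt = .form (.atom a) →
      ∃ j < d.length, j % 2 = 1 ∧ d[j]!.stmt = .form (.atom a)) ∧
    (d.length % 2 = 1 → z = true → ∀ i < d.length, d[i]!.ref ≠ some (k, true))

theorem not_atomic_of_attacks {s : Statement} {φ : Formula} (h : Attacks s φ) : ¬ φ.isAtomic := by
  cases h <;> simp [Formula.isAtomic]

theorem sd_of_concat {φ : Formula} {d : List Move} {m : Move} (hd : 0 < d.length)
    (h : SDialogueFor NRules φ (d ++ [m])) : SDialogueFor NRules φ d := by
  obtain ⟨⟨h1, h2⟩, ⟨h3, h4⟩, h5, h6⟩ := h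
  have hl : (d ++ [m]).length = d.length + 1 := by simp
  refine ⟨⟨fun _ => ?_, fun i hi hid => ?_⟩, ⟨fun i hi he a ha => ?_, fun k hk i hi j hj hri hrj => ?_⟩, hd, ?_⟩
  · have := h1 (by omega)
    rwa [ga d m hd] at this
  · obtain ⟨k, z, a1, a2, a3, a4, a5⟩ := h2 i hi (by omega)
    rw [ga d m hid] at *
    rw [ga d m (by omega)] at *
    refine ⟨k, z, a1, a2, a3, a4, fun hz => ?_⟩
    obtain ⟨k', χ, b1, b2, b3, b4⟩ := a5 hz
    rw [ga d m (by omega)] at b3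
    exact ⟨k', χ, b1, b2, b3, b4⟩
  · obtain ⟨j, b1, b2, b3⟩ := h3 i (by omega) he a (by rwa [ga d m hi])
    rw [ga d m (by omega)] at b3
    exact ⟨j, b1, b2, b3⟩
  · exact h4 k hk i (by omega) j (by omega) (by rwa [ga d m hi]) (by rwa [ga d m hj])
  · rwa [ga d m hd] at h6

theorem sd_append {φ : Formula} {d : List Move} {m : Move} (hd : 0 < d.length) :
    SDialogueFor NRules φ (d ++ [m]) ↔ SDialogueFor NRules φ d ∧ Ext d m := by
  constructor
  · intro h
    refine ⟨sd_of_concat hd h, ?_⟩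
    obtain ⟨⟨h1, h2⟩, ⟨h3, h4⟩, h5, h6⟩ := h
    have hl : (d ++ [m]).length = d.length + 1 := by simp
    obtain ⟨k, z, a1, a2, a3, a4, a5⟩ := h2 d.length hd (by omega)
    rw [gb] at *
    rw [ga d m a2] at *
    refine ⟨k, z, a1, a2, a3, fun hz => ?_, fun hz => ?_, fun he a ha => ?_, fun he hz i hi hc => ?_⟩
    · obtain ⟨χ, b1, b2, b3⟩ := a4 hz
      exact ⟨χ, b1, b3⟩
    · obtain ⟨k', χ, b1, b2, b3, b4⟩ := a5 hz
      rw [ga d m (by omega)] at b3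
      exact ⟨k', χ, b1, b2, b3, b4⟩
    · obtain ⟨j, b1, b2, b3⟩ := h3 d.length (by omega) he a (by rwa [gb])
      rw [ga d m b1] at b3
      exact ⟨j, b1, b2, b3⟩
    · subst hz
      have := h4 k (by omega) i (by omega) d.length (by omega) (by rwa [ga d m hi]) (by rwa [gb])
      omega
  · rintro ⟨⟨⟨h1, h2⟩, ⟨h3, h4⟩, h5, h6⟩, k, z, a1, a2, a3, a4, a5, a6, a7⟩
    have hl : (d ++ [m]).length = d.length + 1 := by simp
    refine ⟨⟨fun _ => ?_, fun i hi hid => ?_⟩, ⟨fun i hi he a ha => ?_, fun k2 hk i hi j hj hri hrj => ?_⟩,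
      by omega, ?_⟩
    · rw [ga d m hd]; exact h1 hd
    · rcases Nat.lt_or_ge i d.length with hlt | hge
      · obtain ⟨k, z, a1, a2, a3, a4, a5⟩ := h2 i hi hlt
        rw [ga d m hlt]
        refine ⟨k, z, a1, a2, a3, ?_, fun hz => ?_⟩
        · rwa [ga d m (by omega)]
        obtain ⟨k', χ, b1, b2, b3, b4⟩ := a5 hz
        rw [ga d m (by omega)]
        refine ⟨k', χ, b1, b2, ?_, b4⟩
        rwa [ga d m (by omega)]
      · obtain rfl : i = d.length := by omega
        rw [gb]
        refine ⟨k, z, a1, a2, a3, fun hz => ?_, fun hz => ?_⟩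
        · rw [ga d m a2]
          obtain ⟨χ, b1, b2⟩ := a4 hz
          exact ⟨χ, b1, not_atomic_of_attacks b2, b2⟩
        · rw [ga d m a2]
          obtain ⟨k', χ, b1, b2, b3, b4⟩ := a5 hz
          refine ⟨k', χ, b1, b2, ?_, b4⟩
          rwa [ga d m (by omega)]
    · rcases Nat.lt_or_ge i d.length with hlt | hge
      · rw [ga d m hlt] at ha
        obtain ⟨j, b1, b2, b3⟩ := h3 i hlt he a ha
        refine ⟨j, b1, b2, ?_⟩
        rwa [ga d m (by omega)]
      · obtain rfl : i = d.length := by omega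
        rw [gb] at ha
        obtain ⟨j, b1, b2, b3⟩ := a6 he a ha
        refine ⟨j, b1, b2, ?_⟩
        rwa [ga d m (by omega)]
    · rcases Nat.lt_or_ge i d.length with hlt | hge <;>
        rcases Nat.lt_or_ge j d.length with hlt' | hge'
      · rw [ga d m hlt] at hri
        rw [ga d m hlt'] at hrj
        exact h4 k2 hk i hlt j hlt' hri hrj
      · obtain rfl : j = d.length := by omega
        rw [gb, a1] at hrj
        rw [ga d m hlt] at hri
        simp only [Option.some.injEq, Prod.mk.injEq] at hrj
        obtain ⟨rfl, rfl⟩ := hrj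
        exact absurd hri (a7 (by omega) rfl i hlt)
      · obtain rfl : i = d.length := by omega
        rw [gb, a1] at hri
        rw [ga d m hlt'] at hrj
        simp only [Option.some.injEq, Prod.mk.injEq] at hri
        obtain ⟨rfl, rfl⟩ := hri
        exact absurd hrj (a7 (by omega) rfl j hlt')
      · omega
    · rwa [ga d m hd]

/-- The initial position. -/
def root (φ : Formula) : List Move := [⟨.form φ, none⟩]

theorem root_of_sd {φ : Formula} {x : Move} (h : SDialogueFor NRules φ [x]) : [x] = root φ := by
  obtain ⟨⟨h1, -⟩, -, -, h6⟩ := h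
  have := (h1 (by simp)).1
  cases x
  simp_all [root]

theorem sd_root {φ : Formula} (h : ∀ a, φ ≠ .atom a) : SDialogueFor NRules φ (root φ) := by
  refine ⟨⟨fun _ => ⟨rfl, φ, rfl⟩, fun i hi hid => ?_⟩, ⟨fun i hi he a ha => ?_, fun k hk i hi j hj hri hrj => ?_⟩,
      by simp [root], rfl⟩ <;> simp [root] at *
  · omega
  · subst hi; simp at ha; exact absurd ha (h a)
  · omega

theorem sd_root_not_atom {φ : Formula} (h : SDialogueFor NRules φ (root φ)) (a : ℕ) : φ ≠ .atom a := by
  rintro rfl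
  obtain ⟨j, hj, -⟩ := h.2.1.1 0 (by simp [root]) rfl a rfl
  omega

/-- Positions (after a P-move) from which P wins. -/
inductive PWin (φ : Formula) : List Move → Prop
  | mk (d : List Move) (M : Move → Move) (hs : SDialogueFor NRules φ d) (ho : d.length % 2 = 1)
      (h : ∀ m, SDialogueFor NRules φ (d ++ [m]) → PWin φ (d ++ [m] ++ [M m])) : PWin φ d

theorem PWin.intro {φ : Formula} {d : List Move} (hs : SDialogueFor NRules φ d) (ho : d.length % 2 = 1)
    (h : ∀ m, SDialogueFor NRules φ (d ++ [m]) → ∃ m', PWin φ (d ++ [m] ++ [m'])) : PWin φ d := by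
  have : ∀ m, ∃ m', SDialogueFor NRules φ (d ++ [m]) → PWin φ (d ++ [m] ++ [m']) := by
    intro m
    by_cases hm : SDialogueFor NRules φ (d ++ [m])
    · obtain ⟨m', hF⟩ := h m hm
      exact ⟨m', fun _ => hF⟩
    · exact ⟨default, fun h => absurd h hm⟩
  choose M hM using this
  exact ⟨d, M, hs, ho, hM⟩

theorem PWin.sd {φ : Formula} {d : List Move} (h : PWin φ d) : SDialogueFor NRules φ d := by
  cases h; assumption

/-- The same with an explicit strategy function. -/
inductive FWin (φ : Formula) (F : List Move → Move) : List Move → Prop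
  | mk (d : List Move) (hs : SDialogueFor NRules φ d) (ho : d.length % 2 = 1)
      (h : ∀ m, SDialogueFor NRules φ (d ++ [m]) → FWin φ F (d ++ [m] ++ [F (d ++ [m])])) : FWin φ F d

theorem FWin.congr {φ : Formula} {F G : List Move → Move} {d : List Move} (h : FWin φ F d) :
    (∀ x, d <+: x → F x = G x) → FWin φ G d := by
  induction h with
  | mk d hs ho h ih =>
    intro hx
    refine ⟨d, hs, ho, fun m hm => ?_⟩
    have := ih m hm (fun x hp => hx x (((List.prefix_append d [m]).trans (List.prefix_append _ _)).trans hp))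
    rwa [hx _ (List.prefix_append d [m])] at this

theorem PWin.exists_F {φ : Formula} {d : List Move} (h : PWin φ d) : ∃ F, FWin φ F d := by
  induction h with
  | mk d M hs ho h ih =>
    have : ∀ m, ∃ F, SDialogueFor NRules φ (d ++ [m]) → FWin φ F (d ++ [m] ++ [M m]) := by
      intro m
      by_cases hm : SDialogueFor NRules φ (d ++ [m])
      · obtain ⟨F, hF⟩ := ih m hm
        exact ⟨F, fun _ => hF⟩
      · exact ⟨fun _ => default, fun h => absurd h hm⟩
    choose G hG using this
    refine ⟨fun x => if x.length = d.length + 1 then M x[d.length]! else G x[d.length]! x, d, hs, ho, fun m hm => ?_⟩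
    have h1 : (d ++ [m])[d.length]! = m := gb d m
    simp only [h1, List.length_append, List.length_singleton, if_true]
    refine (hG m hm).congr ?_
    rintro x ⟨t, rfl⟩
    simp

theorem valid_iff (φ : Formula) : NValid φ ↔ PWin φ (root φ) := by
  constructor
  · rintro ⟨T, hT⟩
    have hroot : root φ ∈ T := by
      obtain ⟨d, hd⟩ := hT.nonempty
      have hsd := hT.dialogues d hd
      obtain ⟨x, l, rfl⟩ := List.exists_cons_of_length_pos hsd.2.2.1
      have h1 : [x] ∈ T := hT.prefix_closed _ hd [x] (by simp) (by simp)
      rwa [root_of_sd (hT.dialogues _ h1)] at h1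
    by_contra hcon
    have step : ∀ d : {d : List Move // d ∈ T ∧ d.length % 2 = 1 ∧ ¬ PWin φ d},
        ∃ e : {d : List Move // d ∈ T ∧ d.length % 2 = 1 ∧ ¬ PWin φ d},
          d.1 <+: e.1 ∧ d.1.length < e.1.length := by
      rintro ⟨d, hd, ho, hw⟩
      have : ∃ m, SDialogueFor NRules φ (d ++ [m]) ∧ ∀ m', ¬ PWin φ (d ++ [m] ++ [m']) := by
        by_contra hc
        push Not at hc
        exact hw (PWin.intro (hT.dialogues d hd) ho hc)
      obtain ⟨m, hm, hm'⟩ := this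
      have h1 := hT.even_all_children d hd ho m hm
      obtain ⟨m', h2, -⟩ := hT.odd_unique_child _ h1 (by simp) (by simp; omega)
      refine ⟨⟨d ++ [m] ++ [m'], h2, by simp; omega, hm' m'⟩, by simp, by simp⟩
    choose nx hnx using step
    let g : ℕ → {d : List Move // d ∈ T ∧ d.length % 2 = 1 ∧ ¬ PWin φ d} :=
      fun n => nx^[n] ⟨root φ, hroot, by simp [root], hcon⟩
    have hg : ∀ n, g (n+1) = nx (g n) := fun n => Function.iterate_succ_apply' _ _ _
    have hlen : ∀ n, n < (g n).1.length := by
      intro n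
      induction n with
      | zero => simp [g, root]
      | succ n ih =>
        have := (hnx (g n)).2
        rw [← hg] at this
        omega
    have hpre : ∀ i j, i ≤ j → (g i).1 <+: (g j).1 := by
      intro i j hij
      induction j, hij using Nat.le_induction with
      | base => exact List.prefix_refl _
      | succ j hj ih =>
        have := (hnx (g j)).1
        rw [← hg] at this
        exact ih.trans this
    obtain ⟨n, hn, hnT⟩ := hT.no_infinite_branch (fun i => (g i).1[i]!)
    apply hnT
    refine hT.prefix_closed _ (g n).2.1 _ ?_ (by simpa using hn)
    rw [List.prefix_iff_eq_take]
    apply List.ext_getElem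
    · have := hlen n
      simp; omega
    · intro i h1 h2
      have hi : i < n := by simpa using h1
      have hi2 := hlen i
      simp only [List.getElem_ofFn, List.getElem_take]
      rw [getElem!_pos (g i).1 i hi2]
      exact (hpre i n hi.le).getElem hi2
  · intro h
    obtain ⟨F, hF⟩ := h.exists_F
    have hroot : root φ = [⟨.form φ, none⟩] := rfl
    let T : Set (List Move) := {d | SDialogueFor NRules φ d ∧
      ∀ e m, e ++ [m] <+: d → e.length % 2 = 0 → 0 < e.length → m = F e}
    have hpc : ∀ d ∈ T, ∀ e : List Move, e <+: d → 0 < e.length → e ∈ T := by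
      rintro d ⟨h1, h2⟩ e ⟨t, rfl⟩ he
      refine ⟨?_, fun e' m hp => h2 e' m (hp.trans (List.prefix_append _ _))⟩
      clear h2
      induction t using List.reverseRecOn with
      | nil => simpa using h1
      | append_singleton t x ih =>
        rw [← List.append_assoc] at h1
        exact ih (sd_of_concat (by simp; omega) h1)
    have hext : ∀ d ∈ T, ∀ m, SDialogueFor NRules φ (d ++ [m]) →
        (d.length % 2 = 0 → m = F d) → d ++ [m] ∈ T := by
      rintro d ⟨h1, h2⟩ m hm hmF
      refine ⟨hm, fun e m' hp he hpos => ?_⟩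
      rcases List.prefix_concat_iff.1 hp with h | h
      · have := List.append_inj' h rfl
        obtain ⟨rfl, h3⟩ := this
        simp at h3
        rw [h3]; exact hmF he
      · exact h2 e m' h he hpos
    have hW : ∀ n, ∀ d ∈ T, d.length = 2 * n + 1 → FWin φ F d := by
      intro n
      induction n with
      | zero =>
        intro d hd hl
        obtain ⟨x, rfl⟩ := List.length_eq_one_iff.1 hl
        rw [root_of_sd hd.1]
        exact hF
      | succ n ih =>
        intro d hd hl
        obtain ⟨d', y, rfl⟩ : ∃ d' y, d = d' ++ [y] :=
          ⟨d.dropLast, d.getLast (by rintro rfl; simp at hl), (List.dropLast_concat_getLast _).symm⟩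
        obtain ⟨d'', x, rfl⟩ : ∃ d'' y, d' = d'' ++ [y] :=
          ⟨d'.dropLast, d'.getLast (by rintro rfl; simp at hl), (List.dropLast_concat_getLast _).symm⟩
        simp at hl
        have h1 := hpc _ hd (d'' ++ [x]) (by simp) (by simp)
        have h2 := hpc _ hd d'' (by simp) (by omega)
        have h3 := ih d'' h2 (by omega)
        have h4 := hd.2 (d'' ++ [x]) y (by simp) (by simp; omega) (by simp)
        cases h3 with
        | mk _ hs ho h => rw [h4]; exact h x h1.1
    have hE : ∀ d ∈ T, d.length % 2 = 0 → d ++ [F d] ∈ T := by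
      intro d hd he
      have hpos := hd.1.2.2.1
      obtain ⟨d', y, rfl⟩ : ∃ d' y, d = d' ++ [y] :=
          ⟨d.dropLast, d.getLast (by rintro rfl; simp at hpos), (List.dropLast_concat_getLast _).symm⟩
      simp at he
      have h2 := hpc _ hd d' (by simp) (by omega)
      have h3 := hW (d'.length / 2) d' h2 (by omega)
      cases h3 with
      | mk _ hs ho h =>
        refine hext _ hd _ ?_ (fun _ => rfl)
        have := h y hd.1
        cases this; assumption
    refine ⟨T, ⟨⟨root φ, h.sd, ?_⟩, fun d hd => hd.1, hpc, ?_, ?_, ?_, ?_⟩⟩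
    · intro e m hp he hpos
      have := hp.length_le
      simp [root] at this
      subst this
      simp at hpos
    · intro d hd hl
      refine ⟨hd.1, ?_, fun m hm => hl m ?_⟩
      · by_contra hc
        exact hl _ (hE d hd (by omega))
      · refine hext d hd m hm (fun he => ?_)
        exact absurd (hE d hd he) (hl _)
    · intro f
      by_contra hc
      push Not at hc
      have key : ∀ d, FWin φ F d → ∀ n, d = List.ofFn (fun i : Fin n => f i) → False := by
        intro d hd
        induction hd with
        | mk d hs ho h ih =>
          intro n hn
          have e1 : d ++ [f n] = List.ofFn (fun i : Fin (n+1) => f i) := by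
            rw [List.ofFn_succ_last]; simp [hn]
          have e2 : d ++ [f n] ++ [f (n+1)] = List.ofFn (fun i : Fin (n+2) => f i) := by
            rw [List.ofFn_succ_last, e1]; simp
          have t1 := hc (n+1) (by omega)
          have t2 := hc (n+2) (by omega)
          rw [← e1] at t1
          rw [← e2] at t2
          have := t2.2 (d ++ [f n]) (f (n+1)) (List.prefix_refl _) (by simp; omega) (by simp)
          refine ih (f n) t1.1 (n+2) ?_
          rw [← this, e2]
      have t1 := hc 1 (by omega)
      exact key _ hF 1 (by rw [← root_of_sd (x := f 0) (by simpa using t1.1)]; simp)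
    · intro d hd hpos he
      exact ⟨F d, hE d hd he, fun m hm => hm.2 d m (List.prefix_refl _) he hpos⟩
    · intro d hd ho m hm
      exact hext d hd m hm (by omega)

/-- Simulation between a dialogue `e` for `X`, in which O opens with the symbolic attack `c`
and P answers `θ`, and a dialogue `d` for `θ`. -/
structure Rel (X : Formula) (c : Statement) (e d : List Move) (s : ℕ → ℕ) : Prop where
  len : 2 ≤ e.length
  e0s : e[0]!.stmt = .form X
  e0r : e[0]!.ref = none
  e1s : e[1]!.stmt = c
  e1r : e[1]!.ref = some (0, true)
  rng : ∀ j, 2 ≤ j → j < e.length → s j < d.length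
  par : ∀ j, 2 ≤ j → j < e.length → s j % 2 = j % 2
  st : ∀ j, 2 ≤ j → j < e.length → e[j]!.stmt = d[s j]!.stmt
  rf : ∀ j, 2 ≤ j → j < e.length → (e[j]!.ref = some (1, false) ∧ s j = 0) ∨
    ∃ k z, 2 ≤ k ∧ k < j ∧ e[j]!.ref = some (k, z) ∧ d[s j]!.ref = some (s k, z)

/-- Every move of `d` is simulated in `e`. -/
def Sur (e d : List Move) (s : ℕ → ℕ) : Prop :=
  ∀ i < d.length, ∃ j, 2 ≤ j ∧ j < e.length ∧ s j = i

/-- Every move of `d` is simulated at most once in `e`. -/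
def Inj (e : List Move) (s : ℕ → ℕ) : Prop :=
  ∀ i j, 2 ≤ i → i < e.length → 2 ≤ j → j < e.length → s i = s j → i = j

theorem Rel.weaken {X : Formula} {c : Statement} {e d : List Move} {s : ℕ → ℕ}
    (h : Rel X c e d s) (m : Move) : Rel X c e (d ++ [m]) s := by
  refine ⟨h.len, h.e0s, h.e0r, h.e1s, h.e1r, fun j h1 h2 => ?_, h.par, fun j h1 h2 => ?_, fun j h1 h2 => ?_⟩
  · have := h.rng j h1 h2
    simp; omega
  · rw [ga _ _ (h.rng j h1 h2)]; exact h.st j h1 h2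
  · rw [ga _ _ (h.rng j h1 h2)]; exact h.rf j h1 h2

theorem Rel.add {X : Formula} {c : Statement} {e d : List Move} {s : ℕ → ℕ}
    (h : Rel X c e d s) (x : Move) (t : ℕ) (ht : t < d.length) (hp : t % 2 = e.length % 2)
    (hst : x.stmt = d[t]!.stmt)
    (hr : (x.ref = some (1, false) ∧ t = 0) ∨
      ∃ k z, 2 ≤ k ∧ k < e.length ∧ x.ref = some (k, z) ∧ d[t]!.ref = some (s k, z)) :
    Rel X c (e ++ [x]) d (Function.update s e.length t) := by
  have hlen := h.len
  have key : ∀ j, j < (e ++ [x]).length → j < e.length ∨ j = e.length := by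
    intro j hj; simp at hj; omega
  have hu : ∀ j, j < e.length → Function.update s e.length t j = s j := fun j hj =>
    Function.update_of_ne (by omega) _ _
  have hu' : Function.update s e.length t e.length = t := Function.update_self _ _ _
  refine ⟨by simp; omega, ?_, ?_, ?_, ?_, fun j h1 h2 => ?_, fun j h1 h2 => ?_, fun j h1 h2 => ?_,
    fun j h1 h2 => ?_⟩
  · rw [ga _ _ (by omega)]; exact h.e0s
  · rw [ga _ _ (by omega)]; exact h.e0r
  · rw [ga _ _ (by omega)]; exact h.e1s
  · rw [ga _ _ (by omega)]; exact h.e1r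
  · rcases key j h2 with h3 | rfl
    · rw [hu j h3]; exact h.rng j h1 h3
    · rwa [hu']
  · rcases key j h2 with h3 | rfl
    · rw [hu j h3]; exact h.par j h1 h3
    · rwa [hu']
  · rcases key j h2 with h3 | rfl
    · rw [hu j h3, ga _ _ h3]; exact h.st j h1 h3
    · rwa [hu', gb]
  · rcases key j h2 with h3 | rfl
    · rw [hu j h3, ga _ _ h3]
      rcases h.rf j h1 h3 with h4 | ⟨k, z, h4, h5, h6, h7⟩
      · exact Or.inl h4
      · refine Or.inr ⟨k, z, h4, h5, h6, ?_⟩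
        rwa [hu k (by omega)]
    · rw [hu', gb]
      rcases hr with h4 | ⟨k, z, h4, h5, h6, h7⟩
      · exact Or.inl h4
      · refine Or.inr ⟨k, z, h4, h5, h6, ?_⟩
        rwa [hu k (by omega)]

theorem Sur.add {e d : List Move} {s : ℕ → ℕ} (h : Sur e d s) (x : Move) (t : ℕ) :
    Sur (e ++ [x]) d (Function.update s e.length t) := by
  intro i hi
  obtain ⟨j, h1, h2, h3⟩ := h i hi
  refine ⟨j, h1, by simp; omega, ?_⟩
  rwa [Function.update_of_ne (by omega)]

theorem Sur.add' {e d : List Move} {s : ℕ → ℕ} (h : Sur e d s) (he : 2 ≤ e.length) (x m : Move) :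
    Sur (e ++ [x]) (d ++ [m]) (Function.update s e.length d.length) := by
  intro i hi
  simp at hi
  rcases Nat.lt_or_ge i d.length with h1 | h1
  · exact h.add x d.length i h1
  · exact ⟨e.length, he, by simp, by rw [Function.update_self]; omega⟩

theorem Inj.add {e d : List Move} {s : ℕ → ℕ} (h : Inj e s)
    (hr : ∀ j, 2 ≤ j → j < e.length → s j < d.length) (x : Move) :
    Inj (e ++ [x]) (Function.update s e.length d.length) := by
  intro i j hi hi' hj hj' hij
  simp at hi' hj'
  rcases Nat.lt_or_ge i e.length with h1 | h1 <;> rcases Nat.lt_or_ge j e.length with h2 | h2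
  · rw [Function.update_of_ne (by omega), Function.update_of_ne (by omega)] at hij
    exact h i j hi h1 hj h2 hij
  · obtain rfl : j = e.length := by omega
    rw [Function.update_of_ne (by omega), Function.update_self] at hij
    have := hr i hi h1
    omega
  · obtain rfl : i = e.length := by omega
    rw [Function.update_of_ne (a := j) (by omega), Function.update_self] at hij
    have := hr j hj h2
    omega
  · omega

theorem ref_lt {φ : Formula} {d : List Move} (h : SDialogueFor NRules φ d) {i k : ℕ} {z : Bool}
    (hi : i < d.length) (hr : d[i]!.ref = some (k, z)) : k < i := by
  rcases Nat.eq_zero_or_pos i with rfl | hpos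
  · rw [(h.1.1 hi).1] at hr; cases hr
  · obtain ⟨k', z', h1, h2, -⟩ := h.1.2 i hpos hi
    rw [hr] at h1
    simp at h1
    omega

theorem Rel.both {X : Formula} {c : Statement} {e d : List Move} {s : ℕ → ℕ}
    (h : Rel X c e d s) (hpar : e.length % 2 = d.length % 2) (x m : Move) (hst : x.stmt = m.stmt)
    (k : ℕ) (z : Bool) (hk : 2 ≤ k) (hk' : k < e.length) (hx : x.ref = some (k, z))
    (hm : m.ref = some (s k, z)) :
    Rel X c (e ++ [x]) (d ++ [m]) (Function.update s e.length d.length) := by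
  refine (h.weaken m).add x d.length (by simp) hpar.symm (by rw [gb, hst]) (Or.inr ⟨k, z, hk, hk', hx, ?_⟩)
  rw [gb, hm]

/-- Moves of `d` can be copied to `e`. -/
theorem Rel.up {X θ : Formula} {c : Statement} {e d : List Move} {s : ℕ → ℕ}
    (h : Rel X c e d s) (hsur : Sur e d s) (hpar : e.length % 2 = d.length % 2)
    (he : SDialogueFor NRules X e) (hd : SDialogueFor NRules θ d) {m : Move} (hm : Ext d m) :
    ∃ x, Ext e x ∧ Rel X c (e ++ [x]) (d ++ [m]) (Function.update s e.length d.length) := by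
  obtain ⟨i, z, a1, a2, a3, a4, a5, a6, a7⟩ := hm
  obtain ⟨j, hj, hj', rfl⟩ := hsur i a2
  refine ⟨⟨m.stmt, some (j, z)⟩, ⟨j, z, rfl, hj', ?_, fun hz => ?_, fun hz => ?_, fun hl a ha => ?_,
    fun hl hz i hi hri => ?_⟩, h.both hpar _ m rfl j z hj hj' rfl a1⟩
  · have := h.par j hj hj'
    omega
  · rw [h.st j hj hj']; exact a4 hz
  · obtain ⟨k', χ, b1, b2, b3, b4⟩ := a5 hz
    rcases h.rf j hj hj' with ⟨c1, c2⟩ | ⟨k, z', c1, c2, c3, c4⟩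
    · rw [c2, (hd.1.1 hd.2.2.1).1] at b1; cases b1
    · rw [b1] at c4
      simp at c4
      obtain ⟨rfl, rfl⟩ := c4
      refine ⟨k, χ, c3, c2, ?_, ?_⟩
      · rwa [h.st k c1 (by omega)]
      · rwa [h.st j hj hj']
  · obtain ⟨i, b1, b2, b3⟩ := a6 (by omega) a ha
    obtain ⟨j', d1, d2, rfl⟩ := hsur i b1
    refine ⟨j', d2, ?_, ?_⟩
    · rw [← h.par j' d1 d2]; exact b2
    · rwa [h.st j' d1 d2]
  · have hlt := ref_lt he hi hri
    rcases h.rf i (by omega) hi with ⟨c1, c2⟩ | ⟨k, z', c1, c2, c3, c4⟩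
    · rw [hri] at c1; simp at c1
    · rw [hri] at c3
      simp at c3
      obtain ⟨rfl, rfl⟩ := c3
      exact a7 (by omega) hz (s i) (h.rng i (by omega) hi) c4

/-- Moves of `e`, other than a defense against the opening attack, can be copied to `d`. -/
theorem Rel.down {X θ : Formula} {c : Statement} {e d : List Move} {s : ℕ → ℕ}
    (hc : ∀ χ, c ≠ .form χ)
    (h : Rel X c e d s) (hsur : Sur e d s) (hpar : e.length % 2 = d.length % 2)
    (hinj : e.length % 2 = 1 → Inj e s)
    (hd : SDialogueFor NRules θ d) {x : Move} (hx : Ext e x)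
    (hx1 : x.ref ≠ some (1, false)) :
    ∃ m, Ext d m ∧ Rel X c (e ++ [x]) (d ++ [m]) (Function.update s e.length d.length) := by
  obtain ⟨k, z, a1, a2, a3, a4, a5, a6, a7⟩ := hx
  have hlen := h.len
  have hk : 2 ≤ k := by
    by_contra hlt
    obtain rfl | rfl : k = 0 ∨ k = 1 := by omega
    · cases z
      · obtain ⟨k', χ, b1, -⟩ := a5 rfl
        rw [h.e0r] at b1; cases b1
      · exact a7 (by omega) rfl 1 (by omega) h.e1r
    · cases z
      · exact hx1 a1
      · obtain ⟨χ, b1, -⟩ := a4 rfl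
        rw [h.e1s] at b1
        exact hc _ b1
  refine ⟨⟨x.stmt, some (s k, z)⟩, ⟨s k, z, rfl, h.rng k hk a2, ?_, fun hz => ?_, fun hz => ?_, fun hl a ha => ?_,
    fun hl hz i hi hri => ?_⟩, h.both hpar x _ rfl k z hk a2 a1 rfl⟩
  · have := h.par k hk a2
    omega
  · rw [← h.st k hk a2]; exact a4 hz
  · obtain ⟨k', χ, b1, b2, b3, b4⟩ := a5 hz
    rcases h.rf k hk a2 with ⟨c1, c2⟩ | ⟨k'', z', c1, c2, c3, c4⟩
    · rw [b1] at c1; simp at c1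
    · rw [b1] at c3
      simp at c3
      obtain ⟨rfl, rfl⟩ := c3
      refine ⟨s k', χ, c4, ref_lt hd (h.rng k hk a2) c4, ?_, ?_⟩
      · rwa [← h.st k' c1 (by omega)]
      · rwa [← h.st k hk a2]
  · obtain ⟨j, b1, b2, b3⟩ := a6 (by omega) a ha
    have hj : 2 ≤ j := by
      by_contra hlt
      obtain rfl : j = 1 := by omega
      rw [h.e1s] at b3
      exact hc _ b3
    refine ⟨s j, h.rng j hj b1, ?_, ?_⟩
    · rw [h.par j hj b1]; exact b2
    · rwa [← h.st j hj b1]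
  · obtain ⟨j, hj, hj', rfl⟩ := hsur i hi
    rcases h.rf j hj hj' with ⟨c1, c2⟩ | ⟨k', z', c1, c2, c3, c4⟩
    · rw [c2, (hd.1.1 hd.2.2.1).1] at hri; cases hri
    · rw [hri] at c4
      simp at c4
      obtain ⟨c4, rfl⟩ := c4
      obtain rfl := hinj (by omega) k k' hk a2 c1 (by omega) c4
      exact a7 (by omega) hz j hj' c3

theorem sim_up {X θ : Formula} {c : Statement} (hc : ∀ χ, c ≠ .form χ) {d : List Move} (hw : PWin θ d) :
    ∀ e s, Rel X c e d s → Sur e d s → Inj e s → e.length % 2 = 1 → SDialogueFor NRules X e →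
      PWin X e := by
  induction hw with
  | mk d M hs ho h ih =>
    intro e s hrel hsur hinj he hsd
    refine PWin.intro hsd he fun x hx => ?_
    have hlen := hrel.len
    have hdpos : 0 < d.length := by omega
    have hxe := ((sd_append (by omega)).1 hx).2
    have hx1 : x.ref ≠ some (1, false) := by
      intro hc
      obtain ⟨k, z, a1, a2, a3, -⟩ := hxe
      rw [hc] at a1
      simp at a1
      omega
    obtain ⟨m, hm, hrel1⟩ := hrel.down hc hsur (by omega) (fun _ => hinj) hs hxe hx1
    have hsd1 := (sd_append hdpos).2 ⟨hs, hm⟩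
    have hw1 := (h m hsd1).sd
    have hm2 := ((sd_append (by simp)).1 hw1).2
    have hsur1 := hsur.add' hlen x m
    have hinj1 := hinj.add hrel.rng x
    obtain ⟨y, hy, hrel2⟩ := hrel1.up hsur1 (by simp; omega) hx hsd1 hm2
    refine ⟨y, ih m hsd1 _ _ hrel2 (hsur1.add' hrel1.len _ _) (hinj1.add hrel1.rng y) (by simp; omega) ?_⟩
    exact (sd_append (by simp)).2 ⟨hx, hy⟩

theorem sim_down {X θ : Formula} {c : Statement} (hc : ∀ χ, c ≠ .form χ)
    (hdef : ∀ t, Defends t c X → t = .form θ) {e : List Move} (hw : PWin X e) :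
    ∀ d s, Rel X c e d s → Sur e d s → SDialogueFor NRules θ d →
      (d.length % 2 = 1 → PWin θ d) ∧
      (d.length % 2 = 0 → s (e.length - 1) = 0 → 3 ≤ e.length → ∃ m, PWin θ (d ++ [m])) := by
  induction hw with
  | mk e M hs ho h ih =>
    intro d s hrel hsur hsd
    have hlen := hrel.len
    have hdpos : 0 < d.length := hsd.2.2.1
    -- P is to move in both dialogues
    have step : ∀ x d' s', SDialogueFor NRules X (e ++ [x]) → d'.length % 2 = 0 →
        Rel X c (e ++ [x]) d' s' → Sur (e ++ [x]) d' s' → SDialogueFor NRules θ d' →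
        ∃ m, PWin θ (d' ++ [m]) := by
      intro x d' s' hx hd' hrel' hsur' hsd'
      have hd'pos : 0 < d'.length := hsd'.2.2.1
      have hl : (e ++ [x]).length = e.length + 1 := by simp
      have hw1 := (h x hx).sd
      have hext := ((sd_append (by simp)).1 hw1).2
      by_cases hr : (M x).ref = some (1, false)
      · have hst : (M x).stmt = .form θ := by
          obtain ⟨k, z, a1, a2, a3, a4, a5, a6, a7⟩ := hext
          rw [hr] at a1
          simp at a1
          obtain ⟨rfl, rfl⟩ := a1
          obtain ⟨k', χ, b1, b2, b3, b4⟩ := a5 rfl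
          rw [hrel'.e1r] at b1
          simp at b1
          subst b1
          rw [hrel'.e0s] at b3
          cases b3
          rw [hrel'.e1s] at b4
          exact hdef _ b4
        have hrel2 := hrel'.add (M x) 0 hd'pos (by omega) (by rw [hst, hsd'.2.2.2]) (Or.inl ⟨hr, rfl⟩)
        refine (ih x hx d' _ hrel2 (hsur'.add _ _) hsd').2 hd' ?_ (by simp; omega)
        have : (e ++ [x] ++ [M x]).length - 1 = (e ++ [x]).length := by simp
        rw [this, Function.update_self]
      · obtain ⟨m, hm, hrel2⟩ := hrel'.down hc hsur' (by omega) (by omega) hsd' hext hr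
        exact ⟨m, (ih x hx _ _ hrel2 (hsur'.add' hrel'.len _ _) ((sd_append hd'pos).2 ⟨hsd', hm⟩)).1
          (by simp; omega)⟩
    constructor
    · intro hd
      refine PWin.intro hsd hd fun m hm => ?_
      have hme := ((sd_append hdpos).1 hm).2
      obtain ⟨x, hx, hrel1⟩ := hrel.up hsur (by omega) hs hsd hme
      exact step x _ _ ((sd_append (by omega)).2 ⟨hs, hx⟩) (by simp; omega) hrel1 (hsur.add' hlen _ _) hm
    · intro hd hs0 h3
      -- O repeats his attack on the repeated assertion of `θ`
      obtain ⟨k, z, a1, a2, a3, a4, a5⟩ := hsd.1.2 1 (by omega) (by omega)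
      obtain rfl : k = 0 := by omega
      have hz : z = true := by
        cases z
        · obtain ⟨_, _, _, hlt, _⟩ := a5 rfl
          omega
        · rfl
      subst hz
      obtain ⟨χ, b1, -, b3⟩ := a4 rfl
      have hst := hrel.st (e.length - 1) (by omega) (by omega)
      rw [hs0] at hst
      have hx : Ext e ⟨d[1]!.stmt, some (e.length - 1, true)⟩ := by
        refine ⟨e.length - 1, true, rfl, by omega, by omega, fun _ => ⟨χ, by rw [hst, b1], b3⟩, by simp,
          by omega, fun _ _ i hi hri => ?_⟩
        have := ref_lt hs hi hri
        omega
      refine step _ d _ ((sd_append (by omega)).2 ⟨hs, hx⟩) hd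
        (hrel.add _ 1 (by omega) (by omega) rfl
          (Or.inr ⟨e.length - 1, true, by omega, by omega, rfl, by rw [hs0, a1]⟩)) (hsur.add _ _) hsd

theorem rel_init (X θ : Formula) (c : Statement) :
    Rel X c (root X ++ [⟨c, some (0, true)⟩] ++ [⟨.form θ, some (1, false)⟩]) (root θ) (fun _ => 0) := by
  refine ⟨by simp [root], rfl, rfl, rfl, rfl, fun j h1 h2 => by simp [root], fun j h1 h2 => ?_,
    fun j h1 h2 => ?_, fun j h1 h2 => ?_⟩
  all_goals
    simp [root] at h2
    obtain rfl : j = 2 := by omega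
  · rfl
  · rfl
  · exact Or.inl ⟨rfl, rfl⟩

theorem sur_init (X θ : Formula) (c : Statement) :
    Sur (root X ++ [⟨c, some (0, true)⟩] ++ [⟨.form θ, some (1, false)⟩]) (root θ) (fun _ => 0) := by
  intro i hi
  simp [root] at hi
  exact ⟨2, le_refl _, by simp [root], hi.symm⟩

theorem inj_init (X θ : Formula) (c : Statement) :
    Inj (root X ++ [⟨c, some (0, true)⟩] ++ [⟨.form θ, some (1, false)⟩]) (fun _ => 0) := by
  intro i j hi hi' hj hj' _
  simp [root] at hi' hj'
  omega

theorem conj_component {X θ : Formula} {c : Statement} (hc : ∀ χ, c ≠ .form χ)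
    (hatt : Attacks c X)
    (hdef : ∀ t, Defends t c X → t = .form θ) (hw : PWin X (root X)) : PWin θ (root θ) := by
  cases hw with
  | mk _ M hs ho h =>
    have h1 : SDialogueFor NRules X (root X ++ [⟨c, some (0, true)⟩]) := by
      refine (sd_append (by simp [root])).2 ⟨hs, 0, true, rfl, by simp [root], by simp [root],
        fun _ => ⟨X, rfl, hatt⟩, by simp, by simp [root], fun _ _ i hi hri => ?_⟩
      have := ref_lt hs hi hri
      simp [root] at hi
      subst hi
      cases hri
    have h2 := h _ h1
    have hext := ((sd_append (by simp)).1 h2.sd).2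
    obtain ⟨k, z, a1, a2, a3, a4, a5, a6, a7⟩ := hext
    obtain rfl : k = 1 := by
      simp [root] at a2 a3
      omega
    have hz : z = false := by
      cases z
      · rfl
      · obtain ⟨χ, b1, -⟩ := a4 rfl
        exact absurd b1 (hc χ)
    subst hz
    obtain ⟨k', χ, b1, b2, b3, b4⟩ := a5 rfl
    obtain rfl : k' = 0 := by omega
    have hX : χ = X := by
      have : Statement.form X = .form χ := b3
      cases this; rfl
    subst hX
    have hst := hdef _ b4
    have hM : M ⟨c, some (0, true)⟩ = ⟨.form θ, some (1, false)⟩ := by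
      rw [← hst, ← a1]
    have hna : ∀ a, θ ≠ .atom a := by
      rintro a rfl
      obtain ⟨j, d1, d2, d3⟩ := a6 (by simp [root]) a hst
      simp [root] at d1
      obtain rfl : j = 1 := by omega
      exact hc _ d3
    rw [hM] at h2
    exact (sim_down hc hdef h2 _ _ (rel_init _ θ c) (sur_init _ θ c) (sd_root hna)).1 (by simp [root])

theorem conj_intro {φ ψ : Formula} (h1 : PWin φ (root φ)) (h2 : PWin ψ (root ψ)) :
    PWin (.conj φ ψ) (root (.conj φ ψ)) := by
  refine PWin.intro (sd_root (by simp)) (by simp [root]) fun m hm => ?_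
  obtain ⟨k, z, a1, a2, a3, a4, a5, a6, a7⟩ := ((sd_append (by simp [root])).1 hm).2
  obtain rfl : k = 0 := by simpa [root] using a2
  have hz : z = true := by
    cases z
    · obtain ⟨_, _, _, hlt, _⟩ := a5 rfl
      omega
    · rfl
  subst hz
  obtain ⟨χ, b1, b2⟩ := a4 rfl
  have hX : χ = .conj φ ψ := by
    have : Statement.form (.conj φ ψ) = .form χ := b1
    cases this; rfl
  subst hX
  have main : ∀ c θ, m.stmt = c → (∀ χ, c ≠ .form χ) → Defends (.form θ) c (.conj φ ψ) →
      PWin θ (root θ) → ∃ m', PWin (.conj φ ψ) (root (.conj φ ψ) ++ [m] ++ [m']) := by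
    intro c θ hcm hc hdf hw
    have hm' : m = ⟨c, some (0, true)⟩ := by rw [← hcm, ← a1]
    subst hm'
    refine ⟨⟨.form θ, some (1, false)⟩, sim_up hc hw _ _ (rel_init _ θ c) (sur_init _ θ c) (inj_init _ θ c)
      (by simp [root]) ((sd_append (by simp)).2 ⟨hm, 1, false, rfl, by simp [root], by simp [root], by simp,
        fun _ => ⟨0, _, rfl, by omega, rfl, hdf⟩, fun _ a ha => ?_, by simp⟩)⟩
    simp at ha
    exact absurd ha (sd_root_not_atom hw.sd a)
  generalize hs : m.stmt = c at b2
  cases b2 with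
  | conjL => exact main _ φ hs (by simp) (.conjL _ _) h1
  | conjR => exact main _ ψ hs (by simp) (.conjR _ _) h2

end NDlg

/-- For all formulas `φ` and `ψ`: `φ ∧ ψ` is N-valid iff both `φ`
and `ψ` are N-valid. -/
theorem conj_N_valid_iff (φ ψ : Formula) :
    NValid (Formula.conj φ ψ) ↔ NValid φ ∧ NValid ψ := by
  simp only [NDlg.valid_iff]
  constructor
  · intro h
    exact ⟨NDlg.conj_component (c := .conjL) (by simp) (.conjL _ _) (by rintro t ⟨⟩; rfl) h,
      NDlg.conj_component (c := .conjR) (by simp) (.conjR _ _) (by rintro t ⟨⟩; rfl) h⟩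
  · rintro ⟨h1, h2⟩
    exact NDlg.conj_intro h1 h2
end

section
/- (Meta-level contraposition) For all propositional formulas φ and ψ: if the implication φ → ψ is N-valid, then the contraposed implication ¬ψ → ¬φ is N-valid. -/
namespace MetaContra

/-- Shift of references from the dialogue for `φ → ψ` to the one for `¬ψ → ¬φ`. -/
def gref : Option (ℕ × Bool) → Option (ℕ × Bool)
  | none => none
  | some (1, false) => some (1, true)
  | some (m, z) => some (m + 2, z)

/-- Translation of moves. -/
def g (m : Move) : Move := ⟨m.stmt, gref m.ref⟩

lemma gref_spec (m : ℕ) (z : Bool) (h : ¬ (m = 1 ∧ z = false)) :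
    gref (some (m, z)) = some (m + 2, z) := by
  unfold gref
  split <;> simp_all

lemma gref_one : gref (some (1, false)) = some (1, true) := rfl

lemma gref_cases (r : Option (ℕ × Bool)) (k : ℕ) (z : Bool) (h : gref r = some (k, z)) :
    (r = some (1, false) ∧ k = 1 ∧ z = true) ∨ (∃ k', k = k' + 2 ∧ r = some (k', z)) := by
  rcases r with _ | ⟨m, z'⟩
  · simp [gref] at h
  · by_cases hc : m = 1 ∧ z' = false
    · obtain ⟨rfl, rfl⟩ := hc
      left
      rw [gref_one] at h
      simp at h
      exact ⟨rfl, h.1.symm, h.2⟩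
    · rw [gref_spec _ _ hc] at h
      simp at h
      right
      exact ⟨m, h.1.symm, by rw [h.2]⟩

lemma gref_inj : Function.Injective gref := by
  intro a b h
  rcases hb : gref b with _ | ⟨k, z⟩
  · rcases a with _ | ⟨m, z⟩ <;> rcases b with _ | ⟨m', z'⟩
    · rfl
    · by_cases hc : m' = 1 ∧ z' = false
      · obtain ⟨rfl, rfl⟩ := hc; simp [gref] at hb
      · simp [gref_spec _ _ hc] at hb
    · by_cases hc : m = 1 ∧ z = false
      · obtain ⟨rfl, rfl⟩ := hc; simp [gref] at h
      · rw [gref_spec _ _ hc, hb] at h; simp at h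
    · by_cases hc : m' = 1 ∧ z' = false
      · obtain ⟨rfl, rfl⟩ := hc; simp [gref] at hb
      · simp [gref_spec _ _ hc] at hb
  · rw [hb] at h
    rcases gref_cases _ _ _ h with ⟨h1, h2, h3⟩ | ⟨k1, h1, h2⟩ <;>
    rcases gref_cases _ _ _ hb with ⟨h4, h5, h6⟩ | ⟨k2, h4, h5⟩
    · rw [h1, h4]
    · omega
    · omega
    · have : k1 = k2 := by omega
      rw [h2, h5, this]

lemma g_inj : Function.Injective g := by
  intro a b h
  rcases a with ⟨s, r⟩
  rcases b with ⟨s', r'⟩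
  simp [g] at h
  rw [h.1, gref_inj h.2]

lemma g_default : g default = default := rfl

lemma map_get (t : List Move) (i : ℕ) : (t.map g)[i]! = g t[i]! := by
  by_cases h : i < t.length
  · simp [h]
  · have h' : t.length ≤ i := by omega
    simp [h', g_default]

/-- Opening move for `φ → ψ`. -/
def m0 (φ ψ : Formula) : Move := ⟨.form (.impl φ ψ), none⟩
/-- Forced moves for `¬ψ → ¬φ`. -/
def a0 (φ ψ : Formula) : Move := ⟨.form (.impl (.neg ψ) (.neg φ)), none⟩
/-- Forced moves for `¬ψ → ¬φ`. -/
def a1 (ψ : Formula) : Move := ⟨.form (.neg ψ), some (0, true)⟩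
/-- Forced moves for `¬ψ → ¬φ`. -/
def a2 (φ : Formula) : Move := ⟨.form (.neg φ), some (1, false)⟩

/-- Translation of dialogues (without the opening move). -/
def E (φ ψ : Formula) (t : List Move) : List Move :=
  a0 φ ψ :: a1 ψ :: a2 φ :: t.map g

lemma E_get (φ ψ : Formula) (t : List Move) (i : ℕ) (hi : 0 < i) :
    (E φ ψ t)[i + 2]! = g ((m0 φ ψ :: t)[i]!) := by
  obtain ⟨j, rfl⟩ : ∃ j, i = j + 1 := ⟨i - 1, by omega⟩
  have : (E φ ψ t)[j + 1 + 2]! = (t.map g)[j]! := by simp [E]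
  rw [this, map_get]
  simp

lemma E_len (φ ψ : Formula) (t : List Move) :
    (E φ ψ t).length = (m0 φ ψ :: t).length + 2 := by simp [E]

abbrev SD (φ : Formula) (d : List Move) : Prop := SDialogueFor NRules φ d

lemma get_snoc_lt (d : List Move) (m : Move) (i : ℕ) (h : i < d.length) :
    (d ++ [m])[i]! = d[i]! := by
  have h' : i < (d ++ [m]).length := by simp; omega
  rw [getElem!_pos (d ++ [m]) i h', getElem!_pos d i h, List.getElem_append_left h]

lemma get_snoc_len (d : List Move) (m : Move) : (d ++ [m])[d.length]! = m := by
  simp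

/-- Extending a dialogue by an O-move. -/
lemma sd_snoc (χ : Formula) (d : List Move) (m : Move) (hd : SD χ d) (hl : d.length % 2 = 1)
    (μ : ℕ) (z : Bool) (hr : m.ref = some (μ, z)) (hμ : μ < d.length) (hp : μ % 2 = 0)
    (hat : z = true → ∃ φ : Formula, d[μ]!.stmt = .form φ ∧ ¬ φ.isAtomic ∧ Attacks m.stmt φ)
    (hdf : z = false → ∃ (k : ℕ) (φ : Formula), d[μ]!.ref = some (k, true) ∧ k < μ ∧
          d[k]!.stmt = .form φ ∧ Defends m.stmt d[μ]!.stmt φ)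
    (hone : z = true → ∀ i < d.length, d[i]!.ref ≠ some (μ, true)) : SD χ (d ++ [m]) := by
  obtain ⟨⟨h1, h2⟩, ⟨h3, h4⟩, h5, h6⟩ := hd
  have hlen : (d ++ [m]).length = d.length + 1 := by simp
  have key : ∀ i, i < (d ++ [m]).length → i < d.length ∨ i = d.length := by
    intro i hi; omega
  refine ⟨⟨?_, ?_⟩, ⟨?_, ?_⟩, ?_, ?_⟩
  · intro _
    rw [get_snoc_lt _ _ _ h5]
    exact h1 h5
  · intro i hi hil
    rcases key i hil with hi' | rfl
    · obtain ⟨n, y, e1, e2, e3, e4, e5⟩ := h2 i hi hi'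
      refine ⟨n, y, ?_, e2, e3, ?_, ?_⟩
      · rw [get_snoc_lt _ _ _ hi']; exact e1
      · rw [get_snoc_lt _ _ _ hi', get_snoc_lt _ _ _ (by omega)]; exact e4
      · intro hy
        obtain ⟨k, χ', f1, f2, f3, f4⟩ := e5 hy
        refine ⟨k, χ', ?_, f2, ?_, ?_⟩
        · rw [get_snoc_lt _ _ _ (by omega)]; exact f1
        · rw [get_snoc_lt _ _ _ (by omega)]; exact f3
        · rw [get_snoc_lt _ _ _ hi', get_snoc_lt _ _ _ (by omega)]; exact f4
    · refine ⟨μ, z, ?_, hμ, by omega, ?_, ?_⟩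
      · rw [get_snoc_len]; exact hr
      · rw [get_snoc_len, get_snoc_lt _ _ _ hμ]; exact hat
      · intro hy
        obtain ⟨k, χ', f1, f2, f3, f4⟩ := hdf hy
        refine ⟨k, χ', ?_, f2, ?_, ?_⟩
        · rw [get_snoc_lt _ _ _ (by omega)]; exact f1
        · rw [get_snoc_lt _ _ _ (by omega)]; exact f3
        · rw [get_snoc_len, get_snoc_lt _ _ _ (by omega)]; exact f4
  · intro i hi hpi a ha
    rcases key i hi with hi' | rfl
    · rw [get_snoc_lt _ _ _ hi'] at ha
      obtain ⟨j, j1, j2, j3⟩ := h3 i hi' hpi a ha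
      refine ⟨j, j1, j2, ?_⟩
      rw [get_snoc_lt _ _ _ (by omega)]; exact j3
    · omega
  · intro n hn i hi j hj hir hjr
    rcases key i hi with hi' | rfl <;> rcases key j hj with hj' | rfl
    · rw [get_snoc_lt _ _ _ hi'] at hir
      rw [get_snoc_lt _ _ _ hj'] at hjr
      exact h4 n hn i hi' j hj' hir hjr
    · rw [get_snoc_lt _ _ _ hi'] at hir
      rw [get_snoc_len, hr] at hjr
      simp at hjr
      exact absurd hir (by rw [← hjr.1]; exact hone hjr.2 i hi')
    · rw [get_snoc_lt _ _ _ hj'] at hjr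
      rw [get_snoc_len, hr] at hir
      simp at hir
      exact absurd hjr (by rw [← hir.1]; exact hone hir.2 j hj')
    · rfl
  · omega
  · rw [get_snoc_lt _ _ _ h5]; exact h6

/-- Forward translation preserves legality. -/
lemma forward (φ ψ : Formula) (t : List Move) (h : SD (.impl φ ψ) (m0 φ ψ :: t)) :
    SD (.impl (.neg ψ) (.neg φ)) (E φ ψ t) := by
  obtain ⟨⟨-, h2⟩, ⟨h3, h4⟩, -⟩ := h
  have hlen := E_len φ ψ t
  have hget := E_get φ ψ t
  have D0 : (m0 φ ψ :: t)[0]! = m0 φ ψ := rfl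
  have E0 : (E φ ψ t)[0]! = a0 φ ψ := rfl
  have E1 : (E φ ψ t)[1]! = a1 ψ := rfl
  have E2 : (E φ ψ t)[2]! = a2 φ := rfl
  generalize hD : m0 φ ψ :: t = D at *
  generalize hE : E φ ψ t = F at *
  have hDpos : 0 < D.length := by rw [← hD]; simp
  have Dattr0 : ∀ i, 0 < i → i < D.length → ∀ z, D[i]!.ref = some (0, z) → z = true := by
    intro i hi hil z hz
    obtain ⟨n, y, e1, e2, e3, e4, e5⟩ := h2 i hi hil
    rw [hz] at e1
    simp at e1
    obtain ⟨rfl, rfl⟩ := e1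
    cases z
    · obtain ⟨k, χ, f1, f2, -⟩ := e5 rfl
      omega
    · rfl
  have D1 : 1 < D.length → D[1]!.ref = some (0, true) := by
    intro hl
    obtain ⟨n, y, e1, e2, e3, e4, e5⟩ := h2 1 (by omega) hl
    have : n = 0 := by omega
    subst this
    rw [e1, Dattr0 1 (by omega) hl y e1]
  refine ⟨⟨?_, ?_⟩, ⟨?_, ?_⟩, ?_, ?_⟩
  · intro _
    rw [E0]
    exact ⟨rfl, _, rfl⟩
  · intro i hi hil
    obtain rfl | rfl | ⟨j, hj, rfl⟩ : i = 1 ∨ i = 2 ∨ ∃ j, 0 < j ∧ i = j + 2 := by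
      rcases i with _ | _ | _ | i
      · omega
      · simp
      · simp
      · right; right; exact ⟨i + 1, by omega, rfl⟩
    · refine ⟨0, true, by rw [E1]; rfl, by omega, by omega, ?_, by simp⟩
      intro _
      rw [E0, E1]
      exact ⟨_, rfl, by simp [Formula.isAtomic], .impl _ _⟩
    · refine ⟨1, false, by rw [E2]; rfl, by omega, by omega, by simp, ?_⟩
      intro _
      refine ⟨0, _, by rw [E1]; rfl, by omega, by rw [E0]; rfl, ?_⟩
      rw [E1, E2]
      exact .impl _ _
    · have hjl : j < D.length := by omega
      obtain ⟨n, y, e1, e2, e3, e4, e5⟩ := h2 j hj hjl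
      have hr : F[j + 2]!.ref = gref (some (n, y)) := by rw [hget j hj, ← e1]; rfl
      have hs : F[j + 2]!.stmt = D[j]!.stmt := by rw [hget j hj]; rfl
      by_cases hc : n = 1 ∧ y = false
      · obtain ⟨rfl, rfl⟩ := hc
        refine ⟨1, true, by rw [hr]; rfl, by omega, by omega, ?_, by simp⟩
        intro _
        obtain ⟨k, χ, f1, f2, f3, f4⟩ := e5 rfl
        have : k = 0 := by omega
        subst this
        rw [D0] at f3
        simp [m0] at f3
        subst f3
        rw [hs, E1]
        refine ⟨_, rfl, by simp [Formula.isAtomic], ?_⟩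
        generalize D[j]!.stmt = s at *
        generalize D[1]!.stmt = s' at *
        cases f4
        exact .neg _
      · rw [gref_spec _ _ hc] at hr
        refine ⟨n + 2, y, hr, by omega, by omega, ?_, ?_⟩
        · rintro rfl
          obtain ⟨χ, f1, f2, f3⟩ := e4 rfl
          rw [hs]
          rcases Nat.eq_zero_or_pos n with rfl | hn
          · rw [D0] at f1
            simp [m0] at f1
            subst f1
            rw [E2]
            refine ⟨_, rfl, by simp [Formula.isAtomic], ?_⟩
            generalize D[j]!.stmt = s at *
            cases f3
            exact .neg _
          · rw [hget n hn]
            exact ⟨χ, f1, f2, f3⟩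
        · rintro rfl
          obtain ⟨k, χ, f1, f2, f3, f4⟩ := e5 rfl
          have hn : 0 < n := by omega
          have hk : 0 < k := by
            rcases Nat.eq_zero_or_pos k with rfl | hk
            · have := h4 0 (by omega) n (by omega) 1 (by omega) f1 (D1 (by omega))
              simp [this] at hc
            · exact hk
          refine ⟨k + 2, χ, ?_, by omega, ?_, ?_⟩
          · rw [hget n hn]
            show gref _ = _
            rw [f1, gref_spec _ _ (by simp)]
          · rw [hget k hk]; exact f3
          · rw [hs, hget n hn]; exact f4
  · intro i hi hp a ha
    obtain rfl | rfl | rfl | ⟨j, hj, rfl⟩ : i = 0 ∨ i = 1 ∨ i = 2 ∨ ∃ j, 0 < j ∧ i = j + 2 := by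
      rcases i with _ | _ | _ | i
      · simp
      · simp
      · simp
      · right; right; right; exact ⟨i + 1, by omega, rfl⟩
    · rw [E0] at ha; simp [a0] at ha
    · omega
    · rw [E2] at ha; simp [a2] at ha
    · rw [hget j hj] at ha
      obtain ⟨l, l1, l2, l3⟩ := h3 j (by omega) (by omega) a ha
      refine ⟨l + 2, by omega, by omega, ?_⟩
      rw [hget l (by omega)]
      exact l3
  · intro m hm
    have key : ∀ i < F.length, F[i]!.ref = some (m, true) →
        (i = 1 ∧ m = 0) ∨ (∃ j m', j < D.length ∧ i = j + 2 ∧ m = m' + 2 ∧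
          D[j]!.ref = some (m', true)) := by
      intro i hi hr
      obtain rfl | rfl | rfl | ⟨j, hj, rfl⟩ : i = 0 ∨ i = 1 ∨ i = 2 ∨ ∃ j, 0 < j ∧ i = j + 2 := by
        rcases i with _ | _ | _ | i
        · simp
        · simp
        · simp
        · right; right; right; exact ⟨i + 1, by omega, rfl⟩
      · rw [E0] at hr; simp [a0] at hr
      · rw [E1] at hr; simp [a1] at hr
        left; exact ⟨rfl, hr.symm⟩
      · rw [E2] at hr; simp [a2] at hr
      · rw [hget j hj] at hr
        rcases gref_cases _ _ _ hr with ⟨q1, q2, q3⟩ | ⟨k', q1, q2⟩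
        · omega
        · right
          exact ⟨j, k', by omega, rfl, q1, q2⟩
    intro i hi j hj hir hjr
    rcases key i hi hir with ⟨p1, p2⟩ | ⟨i', k, p1, p2, p3, p4⟩ <;>
    rcases key j hj hjr with ⟨q1, q2⟩ | ⟨j', l, q1, q2, q3, q4⟩
    · omega
    · omega
    · omega
    · have : l = k := by omega
      subst this
      have := h4 l (by omega) i' p1 j' q1 p4 q4
      omega
  · omega
  · rw [E0]; rfl

/-- O-moves can be pulled back. -/
lemma backward (φ ψ : Formula) (t : List Move) (h : SD (.impl φ ψ) (m0 φ ψ :: t))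
    (hodd : (m0 φ ψ :: t).length % 2 = 1) (x : Move)
    (hx : SD (.impl (.neg ψ) (.neg φ)) (E φ ψ t ++ [x])) :
    ∃ m, x = g m ∧ SD (.impl φ ψ) (m0 φ ψ :: t ++ [m]) := by
  have hlen := E_len φ ψ t
  have hget := E_get φ ψ t
  have D0 : (m0 φ ψ :: t)[0]! = m0 φ ψ := rfl
  have E0 : (E φ ψ t)[0]! = a0 φ ψ := rfl
  have E1 : (E φ ψ t)[1]! = a1 ψ := rfl
  have E2 : (E φ ψ t)[2]! = a2 φ := rfl
  generalize hD : m0 φ ψ :: t = D at *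
  generalize hE : E φ ψ t = F at *
  have hDpos : 0 < D.length := by rw [← hD]; simp
  obtain ⟨⟨-, g2⟩, ⟨-, g4⟩, -⟩ := hx
  have hFl : (F ++ [x]).length = F.length + 1 := by simp
  obtain ⟨n, z, e1, e2, e3, e4, e5⟩ := g2 F.length (by omega) (by omega)
  rw [get_snoc_len] at e1 e4 e5
  rw [get_snoc_lt _ _ _ e2] at e4 e5
  have hn0 : n ≠ 0 := by
    rintro rfl
    cases z
    · obtain ⟨k, χ, f1, f2, -⟩ := e5 rfl
      omega
    · have := g4 0 (by omega) F.length (by omega) 1 (by omega)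
        (by rw [get_snoc_len]; exact e1) (by rw [get_snoc_lt _ _ _ (by omega), E1]; rfl)
      omega
  obtain ⟨μ, rfl⟩ : ∃ μ, n = μ + 2 := ⟨n - 2, by omega⟩
  refine ⟨⟨x.stmt, some (μ, z)⟩, ?_, ?_⟩
  · rcases x with ⟨s, r⟩
    simp only at e1
    unfold g
    rw [gref_spec _ _ (by omega), e1]
  · refine sd_snoc _ D _ h hodd μ z rfl (by omega) (by omega) ?_ ?_ ?_
    · intro hz
      obtain ⟨χ, f1, f2, f3⟩ := e4 hz
      rcases Nat.eq_zero_or_pos μ with rfl | hμ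
      · rw [D0]
        refine ⟨_, rfl, by simp [Formula.isAtomic], ?_⟩
        rw [E2] at f1
        simp [a2] at f1
        subst f1
        show Attacks x.stmt _
        generalize x.stmt = s at *
        cases f3
        exact .impl _ _
      · rw [hget μ hμ] at f1
        exact ⟨χ, f1, f2, f3⟩
    · intro hz
      obtain ⟨k, χ, f1, f2, f3, f4⟩ := e5 hz
      rcases Nat.eq_zero_or_pos μ with rfl | hμ
      · rw [E2] at f1; simp [a2] at f1
      · rw [get_snoc_lt _ _ _ (by omega)] at f3
        rw [hget μ hμ] at f1 f4
        rcases gref_cases _ _ _ f1 with ⟨q1, q2, q3⟩ | ⟨k', q1, q2⟩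
        · subst q2
          rw [E1] at f3
          simp [a1] at f3
          subst f3
          generalize x.stmt = s at *
          generalize (g D[μ]!).stmt = s' at *
          cases f4
        · subst q1
          obtain ⟨n', y, d1, d2, d3, -⟩ := h.1.2 μ hμ (by omega)
          rw [q2] at d1
          simp at d1
          have hk : 0 < k' := by omega
          rw [hget k' hk] at f3
          exact ⟨k', χ, q2, by omega, f3, f4⟩
    · rintro rfl i hi hir
      have hi0 : 0 < i := by
        rcases Nat.eq_zero_or_pos i with rfl | hi0
        · rw [D0] at hir; simp [m0] at hir
        · exact hi0
      have := g4 (μ + 2) (by omega) F.length (by omega) (i + 2) (by omega)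
        (by rw [get_snoc_len]; exact e1)
        (by
          rw [get_snoc_lt _ _ _ (by omega), hget i hi0]
          show gref _ = _
          rw [hir, gref_spec _ _ (by simp)])
      omega

/-- The translated strategy. -/
def T' (φ ψ : Formula) (T : Set (List Move)) : Set (List Move) :=
  {e | e = [a0 φ ψ] ∨ e = [a0 φ ψ, a1 ψ] ∨ ∃ t, m0 φ ψ :: t ∈ T ∧ e = E φ ψ t}

lemma E_snoc (φ ψ : Formula) (t : List Move) (m : Move) :
    E φ ψ t ++ [g m] = E φ ψ (t ++ [m]) := by simp [E]

lemma E_snoc_inv (φ ψ : Formula) (t t' : List Move) (x : Move)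
    (h : E φ ψ t ++ [x] = E φ ψ t') : ∃ m, x = g m ∧ t' = t ++ [m] := by
  have h' : t'.map g = t.map g ++ [x] := by simpa [E] using h.symm
  rw [List.map_eq_append_iff] at h'
  obtain ⟨l1, l2, rfl, q1, q2⟩ := h'
  have hl : l1 = t := List.map_injective_iff.mpr g_inj q1
  subst hl
  rw [List.map_eq_singleton_iff] at q2
  obtain ⟨y, rfl, hy⟩ := q2
  exact ⟨y, hy.symm, rfl⟩

lemma sd_a0 (φ ψ : Formula) : SD (.impl (.neg ψ) (.neg φ)) [a0 φ ψ] := by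
  refine ⟨⟨fun _ => ⟨rfl, _, rfl⟩, ?_⟩, ⟨?_, ?_⟩, by simp, rfl⟩
  · intro i hi hl
    simp at hl
    omega
  · intro i hi _ a ha
    simp at hi
    subst hi
    simp [a0] at ha
  · intro m _ i hi j hj _ _
    simp at hi hj
    omega

lemma sd_a1 (φ ψ : Formula) : SD (.impl (.neg ψ) (.neg φ)) [a0 φ ψ, a1 ψ] := by
  refine sd_snoc _ [a0 φ ψ] (a1 ψ) (sd_a0 φ ψ) rfl 0 true rfl (by simp) rfl ?_ (by simp) ?_
  · intro _
    exact ⟨_, rfl, by simp [Formula.isAtomic], .impl _ _⟩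
  · intro _ i hi
    simp at hi
    subst hi
    simp [a0]

lemma forced_a1 (φ ψ : Formula) (x : Move)
    (h : SD (.impl (.neg ψ) (.neg φ)) ([a0 φ ψ] ++ [x])) : x = a1 ψ := by
  obtain ⟨n, z, e1, e2, e3, e4, e5⟩ := h.1.2 1 (by omega) (by simp)
  have : n = 0 := by omega
  subst this
  cases z
  · obtain ⟨k, χ, f1, f2, -⟩ := e5 rfl
    omega
  · obtain ⟨χ, f1, f2, f3⟩ := e4 rfl
    simp [a0] at f1 e1 f3
    subst f1
    rcases x with ⟨s, r⟩
    simp only at e1 f3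
    subst e1
    cases f3
    rfl

lemma strat (φ ψ : Formula) (T : Set (List Move))
    (hT : IsWinningStrategy NRules (.impl φ ψ) T) :
    IsWinningStrategy NRules (.impl (.neg ψ) (.neg φ)) (T' φ ψ T) := by
  have hroot : [m0 φ ψ] ∈ T := by
    obtain ⟨d, hd⟩ := hT.nonempty
    obtain ⟨⟨h1, -⟩, -, h5, h6⟩ := hT.dialogues d hd
    rcases d with _ | ⟨y, t⟩
    · simp at h5
    · have hr := (h1 h5).1
      have : y = m0 φ ψ := by
        rcases y with ⟨s, r⟩
        simp at hr h6
        subst hr h6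
        rfl
      subst this
      exact hT.prefix_closed _ hd _ (by simp) (by simp)
  have hbase : E φ ψ [] ∈ T' φ ψ T := Or.inr (Or.inr ⟨[], hroot, rfl⟩)
  refine ⟨⟨_, hbase⟩, ?_, ?_, ?_, ?_, ?_, ?_⟩
  · rintro d (rfl | rfl | ⟨t, ht, rfl⟩)
    · exact sd_a0 φ ψ
    · exact sd_a1 φ ψ
    · exact forward φ ψ t (hT.dialogues _ ht)
  · intro d hd e he hpos
    rcases e with _ | ⟨x, e⟩
    · simp at hpos
    rcases e with _ | ⟨y, e⟩
    · left
      rcases hd with rfl | rfl | ⟨t, ht, rfl⟩ <;> simp [E] at he <;> simp [he]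
    rcases e with _ | ⟨w, e⟩
    · right; left
      rcases hd with rfl | rfl | ⟨t, ht, rfl⟩ <;> simp [E] at he <;> simp [he]
    right; right
    rcases hd with rfl | rfl | ⟨t, ht, rfl⟩
    · simp at he
    · simp at he
    · simp only [E, List.cons_prefix_cons] at he
      obtain ⟨rfl, rfl, rfl, he⟩ := he
      rw [List.prefix_iff_eq_take, ← List.map_take] at he
      refine ⟨t.take e.length, hT.prefix_closed _ ht _ ?_ (by simp), ?_⟩
      · rw [List.cons_prefix_cons]; exact ⟨rfl, List.take_prefix _ _⟩
      · unfold E; rw [← he]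
  · rintro d (rfl | rfl | ⟨t, ht, rfl⟩) hleaf
    · exact absurd (Or.inr (Or.inl rfl)) (hleaf (a1 ψ))
    · exact absurd hbase (hleaf (a2 φ))
    · have hw := hT.leaf_wins _ ht (by
        intro m hm
        exact hleaf (g m) (Or.inr (Or.inr ⟨t ++ [m], hm, E_snoc φ ψ t m⟩)))
      obtain ⟨w1, w2, w3⟩ := hw
      refine ⟨forward φ ψ t w1, by rw [E_len]; omega, ?_⟩
      intro x hx
      obtain ⟨m, -, hm⟩ := backward φ ψ t w1 w2 x hx
      exact w3 m hm
  · intro f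
    by_contra hcon
    push Not at hcon
    obtain ⟨n, hn, hnT⟩ := hT.no_infinite_branch
      (fun i => match i with | 0 => m0 φ ψ | j + 1 => Function.invFun g (f (j + 3)))
    obtain ⟨k, rfl⟩ : ∃ k, n = k + 1 := ⟨n - 1, by omega⟩
    apply hnT
    have hlen := congrArg List.length (List.ofFn_succ (f := fun i : Fin (k + 3) => f i))
    rcases hcon (k + 3) (by omega) with h | h | ⟨t, ht, h⟩
    · have := congrArg List.length h
      simp at this
    · have := congrArg List.length h
      simp at this
    · have h3 : List.ofFn (fun i : Fin k => f (i + 3)) = t.map g := by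
        simp only [List.ofFn_succ, E, List.cons.injEq] at h
        simpa using h.2.2.2
      have h4 : t = List.ofFn (fun i : Fin k => Function.invFun g (f (i + 3))) := by
        have := congrArg (List.map (Function.invFun g)) h3
        rw [List.map_map, Function.invFun_comp g_inj, List.map_id, List.map_ofFn] at this
        exact this.symm
      rw [List.ofFn_succ]
      rw [h4] at ht
      exact ht
  · rintro d (rfl | rfl | ⟨t, ht, rfl⟩) hpos hev
    · simp at hev
    · refine ⟨a2 φ, hbase, ?_⟩
      rintro y (h | h | ⟨t, ht, h⟩)
      · simp at h
      · simp at h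
      · simp [E] at h
        exact h.1
    · rw [E_len] at hev
      obtain ⟨m, hm, hu⟩ := hT.odd_unique_child _ ht (by simp) (by omega)
      refine ⟨g m, Or.inr (Or.inr ⟨t ++ [m], hm, E_snoc φ ψ t m⟩), ?_⟩
      rintro y (h | h | ⟨t', ht', h⟩)
      · simp [E] at h
      · simp [E] at h
      · obtain ⟨m', rfl, rfl⟩ := E_snoc_inv _ _ _ _ _ h
        rw [hu m' ht']
  · rintro d (rfl | rfl | ⟨t, ht, rfl⟩) hodd x hx
    · rw [forced_a1 φ ψ x hx]
      exact Or.inr (Or.inl rfl)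
    · simp at hodd
    · rw [E_len] at hodd
      obtain ⟨m, rfl, hm⟩ := backward φ ψ t (hT.dialogues _ ht) (by omega) x hx
      exact Or.inr (Or.inr ⟨t ++ [m], hT.even_all_children _ ht (by omega) m hm,
        E_snoc φ ψ t m⟩)

end MetaContra

/-- **Meta-level contraposition.** For all formulas `φ` and `ψ`:
if `φ → ψ` is N-valid, then `¬ψ → ¬φ` is N-valid. -/
theorem meta_contraposition (φ ψ : Formula) (h : NValid (Formula.impl φ ψ)) :
    NValid (Formula.impl (Formula.neg ψ) (Formula.neg φ)) := by
  obtain ⟨T, hT⟩ := h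
  exact ⟨_, MetaContra.strat φ ψ T hT⟩
end

section
/- Conjunction elimination (p ∧ q) → p, for distinct atoms p and q, is not N-valid. -/
theorem getElem!_app_lt (d : List Move) (m : Move) (i : ℕ) (h : i < d.length) :
    (d ++ [m])[i]! = d[i]! := by
  simp [List.getElem!_eq_getElem?_getD, List.getElem?_append_left h]

theorem getElem!_app_eq (d : List Move) (m : Move) :
    (d ++ [m])[d.length]! = m := by
  simp [List.getElem!_eq_getElem?_getD]

/-- Legal extension of an N-dialogue by an O-move. -/
theorem extend_O (φ : Formula) (d : List Move) (hd : SDialogueFor NRules φ d)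
    (hodd : d.length % 2 = 1) (s : Statement) (k : ℕ) (z : Bool) (hk : k < d.length)
    (hk2 : k % 2 = 0)
    (hatt : z = true → (∃ ψ : Formula, d[k]!.stmt = .form ψ ∧ ¬ ψ.isAtomic ∧ Attacks s ψ) ∧
      ∀ i < d.length, d[i]!.ref ≠ some (k, true))
    (hdef : z = false → ∃ (l : ℕ) (ψ : Formula), d[k]!.ref = some (l, true) ∧ l < k ∧
          d[l]!.stmt = .form ψ ∧ Defends s d[k]!.stmt ψ) :
    SDialogueFor NRules φ (d ++ [⟨s, some (k, z)⟩]) := by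
  obtain ⟨⟨h0, hi⟩, ⟨h10, h13⟩, hc, hs⟩ := hd
  have L := getElem!_app_lt d ⟨s, some (k, z)⟩
  have E := getElem!_app_eq d ⟨s, some (k, z)⟩
  have len : (d ++ [(⟨s, some (k, z)⟩ : Move)]).length = d.length + 1 := by simp
  refine ⟨⟨?_, ?_⟩, ⟨?_, ?_⟩, ?_, ?_⟩
  · intro _
    rw [L 0 hc]; exact h0 hc
  · intro i hi0 hil
    rw [len] at hil
    rcases Nat.lt_succ_iff_lt_or_eq.mp hil with h | h
    · obtain ⟨m, z', h1, h2, h3, h4, h5⟩ := hi i hi0 h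
      refine ⟨m, z', ?_, h2, h3, ?_, ?_⟩
      · rw [L i h]; exact h1
      · rw [L i h, L m (by omega)]; exact h4
      · intro hz
        obtain ⟨a, ψ, b1, b2, b3, b4⟩ := h5 hz
        refine ⟨a, ψ, ?_, b2, ?_, ?_⟩
        · rw [L m (by omega)]; exact b1
        · rw [L a (by omega)]; exact b3
        · rw [L i h, L m (by omega)]; exact b4
    · subst h
      rw [E]
      refine ⟨k, z, rfl, hk, by omega, ?_, ?_⟩
      · intro hz
        rw [L k hk]; exact (hatt hz).1
      · intro hz
        obtain ⟨a, ψ, b1, b2, b3, b4⟩ := hdef hz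
        refine ⟨a, ψ, ?_, b2, ?_, ?_⟩
        · rw [L k hk]; exact b1
        · rw [L a (by omega)]; exact b3
        · rw [L k hk]; exact b4
  · intro i hil he a ha
    rw [len] at hil
    have h : i < d.length := by omega
    rw [L i h] at ha
    obtain ⟨j, h1, h2, h3⟩ := h10 i h he a ha
    refine ⟨j, h1, h2, ?_⟩
    rw [L j (by omega)]; exact h3
  · intro m hm i hil j hjl hri hrj
    rw [len] at hil hjl
    rcases Nat.lt_succ_iff_lt_or_eq.mp hil with h | h <;>
    rcases Nat.lt_succ_iff_lt_or_eq.mp hjl with h' | h'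
    · rw [L i h] at hri; rw [L j h'] at hrj
      exact h13 m hm i h j h' hri hrj
    · subst h'
      rw [L i h] at hri; rw [E] at hrj
      simp only [Option.some.injEq, Prod.mk.injEq] at hrj
      obtain ⟨rfl, rfl⟩ := hrj
      exact absurd hri ((hatt rfl).2 i h)
    · subst h
      rw [L j h'] at hrj; rw [E] at hri
      simp only [Option.some.injEq, Prod.mk.injEq] at hri
      obtain ⟨rfl, rfl⟩ := hri
      exact absurd hrj ((hatt rfl).2 j h')
    · omega
  · rw [len]; omega
  · rw [L 0 hc]; exact hs

/-- O can always move. -/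
theorem O_can_move (p q : ℕ) (d : List Move)
    (hd : SDialogueFor NRules (.impl (.conj (.atom p) (.atom q)) (.atom p)) d)
    (hodd : d.length % 2 = 1) :
    ∃ m : Move, SDialogueFor NRules (.impl (.conj (.atom p) (.atom q)) (.atom p))
      (d ++ [m]) := by
  have hd' := hd
  obtain ⟨⟨h0, hi⟩, ⟨h10, h13⟩, hc, hs⟩ := hd'
  have r0 := (h0 hc).1
  by_cases hl : d.length = 1
  · refine ⟨_, extend_O _ d hd hodd (.form (.conj (.atom p) (.atom q))) 0 true hc rfl ?_ ?_⟩
    · intro _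
      refine ⟨⟨_, hs, by simp [Formula.isAtomic], Attacks.impl _ _⟩, ?_⟩
      intro i hil
      have : i = 0 := by omega
      subst this
      rw [r0]; simp
    · intro h; simp at h
  · have hl3 : 3 ≤ d.length := by omega
    have key1 : d[1]!.ref = some (0, true) ∧
        d[1]!.stmt = .form (.conj (.atom p) (.atom q)) := by
      obtain ⟨m, z, h1, h2, h3, h4, h5⟩ := hi 1 (by omega) (by omega)
      have : m = 0 := by omega
      subst this
      cases z with
      | false =>
        obtain ⟨a, ψ, b1, b2, _⟩ := h5 rfl
        omega
      | true =>
        obtain ⟨ψ, b1, b2, b3⟩ := h4 rfl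
        rw [hs] at b1
        obtain rfl := Statement.form.inj b1
        refine ⟨h1, ?_⟩
        generalize d[1]!.stmt = t at b3
        cases b3; rfl
    obtain ⟨r1, s1⟩ := key1
    have key2 : d[2]!.ref = some (1, true) ∧
        (d[2]!.stmt = .conjL ∨ d[2]!.stmt = .conjR) := by
      obtain ⟨m, z, h1, h2, h3, h4, h5⟩ := hi 2 (by omega) (by omega)
      have : m = 1 := by omega
      subst this
      cases z with
      | false =>
        exfalso
        obtain ⟨a, ψ, b1, b2, b3, b4⟩ := h5 rfl
        have : a = 0 := by omega
        subst this
        rw [hs] at b3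
        obtain rfl := Statement.form.inj b3
        have s2 : d[2]!.stmt = .form (.atom p) := by
          rw [s1] at b4
          generalize d[2]!.stmt = t at b4
          cases b4; rfl
        obtain ⟨j, c1, c2, c3⟩ := h10 2 (by omega) rfl p s2
        have : j = 1 := by omega
        subst this
        rw [s1] at c3
        simp at c3
      | true =>
        obtain ⟨ψ, b1, b2, b3⟩ := h4 rfl
        rw [s1] at b1
        obtain rfl := Statement.form.inj b1
        refine ⟨h1, ?_⟩
        generalize d[2]!.stmt = t at b3
        cases b3 <;> simp
    obtain ⟨r2, s2 | s2⟩ := key2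
    · refine ⟨_, extend_O _ d hd hodd (.form (.atom p)) 2 false (by omega) rfl (by simp) ?_⟩
      intro _
      refine ⟨1, _, r2, by omega, s1, ?_⟩
      rw [s2]; exact Defends.conjL _ _
    · refine ⟨_, extend_O _ d hd hodd (.form (.atom q)) 2 false (by omega) rfl (by simp) ?_⟩
      intro _
      refine ⟨1, _, r2, by omega, s1, ?_⟩
      rw [s2]; exact Defends.conjR _ _

/-- A set of lists in which every member can be extended has an infinite branch. -/
theorem infinite_branch (T : Set (List Move)) (d0 : List Move) (h0 : d0 ∈ T)
    (hlen : d0.length = 1) (hext : ∀ d ∈ T, ∃ m : Move, d ++ [m] ∈ T) :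
    ∃ f : ℕ → Move, ∀ n : ℕ, 0 < n → (List.ofFn fun i : Fin n => f i) ∈ T := by
  choose! nx hnx using hext
  let g : ℕ → List Move := fun n => Nat.rec d0 (fun _ l => l ++ [nx l]) n
  have gs : ∀ n, g (n + 1) = g n ++ [nx (g n)] := fun n => rfl
  have gT : ∀ n, g n ∈ T := by
    intro n
    induction n with
    | zero => exact h0
    | succ n ih => rw [gs]; exact hnx _ ih
  have gl : ∀ n, (g n).length = n + 1 := by
    intro n
    induction n with
    | zero => exact hlen
    | succ n ih => rw [gs]; simp [ih]
  refine ⟨fun i => (g i)[i]!, ?_⟩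
  have main : ∀ n, (List.ofFn fun i : Fin (n + 1) => (g i)[(i : ℕ)]!) = g n := by
    intro n
    induction n with
    | zero =>
      have : (g 0).length = 1 := hlen
      obtain ⟨a, ha⟩ := List.length_eq_one_iff.mp this
      simp [ha]
    | succ n ih =>
      rw [List.ofFn_succ_last]
      have e := getElem!_app_eq (g n) (nx (g n))
      rw [gl, ← gs] at e
      simp only [Fin.val_castSucc, Fin.val_last]
      rw [ih, e, ← gs]
  intro n hn
  obtain ⟨k, rfl⟩ : ∃ k, n = k + 1 := ⟨n - 1, by omega⟩
  rw [main]; exact gT k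

/-- Conjunction elimination `(p ∧ q) → p`, for distinct atoms `p`
and `q`, is not N-valid. -/
theorem conj_elim_not_N_valid (p q : ℕ) (hpq : p ≠ q) :
    ¬ NValid (Formula.impl (Formula.conj (Formula.atom p) (Formula.atom q))
        (Formula.atom p)) := by
  rintro ⟨T, hT⟩
  obtain ⟨d, hd⟩ := hT.nonempty
  have hpos := (hT.dialogues d hd).2.2.1
  have hl1 : (d.take 1).length = 1 := by rw [List.length_take]; omega
  have h1 : d.take 1 ∈ T := hT.prefix_closed d hd _ (List.take_prefix 1 d) (by omega)
  obtain ⟨f, hf⟩ := infinite_branch T (d.take 1) h1 hl1 (by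
    intro e he
    have hepos := (hT.dialogues e he).2.2.1
    rcases Nat.mod_two_eq_zero_or_one e.length with h | h
    · exact (hT.odd_unique_child e he hepos h).exists
    · obtain ⟨m, hm⟩ := O_can_move p q e (hT.dialogues e he) h
      exact ⟨m, hT.even_all_children e he h m hm⟩)
  obtain ⟨n, hn, hnT⟩ := hT.no_infinite_branch f
  exact hnT (hf n hn)
end

section
/- The implicational form of modus ponens, p → ((p → q) → q), for distinct atoms p and q, is not N-valid. -/
theorem app_lt (d : List Move) (a : Move) (i : ℕ) (h : i < d.length) :
    (d ++ [a])[i]! = d[i]! := by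
  rw [getElem!_pos (d ++ [a]) i (by simp; omega), getElem!_pos d i h]
  exact List.getElem_append_left h

theorem app_eq (d : List Move) (a : Move) : (d ++ [a])[d.length]! = a := by
  rw [getElem!_pos (d ++ [a]) d.length (by simp)]
  simp

/-- Extending an N-dialogue by an O-move. -/
theorem extend {φ : Formula} {d : List Move} (h : SDialogueFor NRules φ d)
    (hodd : d.length % 2 = 1) (a : Move) (m : ℕ) (z : Bool)
    (href : a.ref = some (m, z)) (hm : m < d.length) (hpar : m % 2 = 0)
    (hatt : z = true → ∃ ψ : Formula, d[m]!.stmt = .form ψ ∧ ¬ ψ.isAtomic ∧ Attacks a.stmt ψ)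
    (hdef : z = false → ∃ (k : ℕ) (ψ : Formula), d[m]!.ref = some (k, true) ∧ k < m ∧
          d[k]!.stmt = .form ψ ∧ Defends a.stmt d[m]!.stmt ψ)
    (hnew : z = true → ∀ i < d.length, d[i]!.ref ≠ some (m, true)) :
    SDialogueFor NRules φ (d ++ [a]) := by
  obtain ⟨⟨h0, h1⟩, ⟨h10, h13⟩, hpos, hφ⟩ := h
  have hlen : (d ++ [a]).length = d.length + 1 := by simp
  refine ⟨⟨?_, ?_⟩, ⟨?_, ?_⟩, ?_, ?_⟩
  · intro _
    rw [app_lt d a 0 hpos]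
    exact h0 hpos
  · intro i hi hil
    rw [hlen] at hil
    rcases Nat.lt_succ_iff_lt_or_eq.mp hil with hlt | rfl
    · obtain ⟨m', z', r1, r2, r3, r4, r5⟩ := h1 i hi hlt
      refine ⟨m', z', ?_, r2, r3, ?_, ?_⟩
      · rw [app_lt d a i hlt]; exact r1
      · rw [app_lt d a i hlt, app_lt d a m' (by omega)]; exact r4
      · intro hz
        obtain ⟨k, ψ, s1, s2, s3, s4⟩ := r5 hz
        refine ⟨k, ψ, ?_⟩
        rw [app_lt d a i hlt, app_lt d a m' (by omega), app_lt d a k (by omega)]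
        exact ⟨s1, s2, s3, s4⟩
    · refine ⟨m, z, ?_, hm, by omega, ?_, ?_⟩
      · rw [app_eq]; exact href
      · rw [app_eq, app_lt d a m hm]; exact hatt
      · intro hz
        obtain ⟨k, ψ, s1, s2, s3, s4⟩ := hdef hz
        refine ⟨k, ψ, ?_⟩
        rw [app_eq, app_lt d a m hm, app_lt d a k (by omega)]
        exact ⟨s1, s2, s3, s4⟩
  · intro i hil hi2 b hb
    rw [hlen] at hil
    have hlt : i < d.length := by omega
    rw [app_lt d a i hlt] at hb
    obtain ⟨j, j1, j2, j3⟩ := h10 i hlt hi2 b hb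
    exact ⟨j, j1, j2, by rw [app_lt d a j (by omega)]; exact j3⟩
  · intro m' hm' i hil j hjl hi hj
    rw [hlen] at hil hjl
    rcases Nat.lt_succ_iff_lt_or_eq.mp hil with hlt | rfl <;>
      rcases Nat.lt_succ_iff_lt_or_eq.mp hjl with hlt' | rfl
    · rw [app_lt d a i hlt] at hi
      rw [app_lt d a j hlt'] at hj
      exact h13 m' hm' i hlt j hlt' hi hj
    · rw [app_lt d a i hlt] at hi
      rw [app_eq, href] at hj
      simp only [Option.some.injEq, Prod.mk.injEq] at hj
      obtain ⟨rfl, rfl⟩ := hj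
      exact absurd hi (hnew rfl i hlt)
    · rw [app_lt d a j hlt'] at hj
      rw [app_eq, href] at hi
      simp only [Option.some.injEq, Prod.mk.injEq] at hi
      obtain ⟨rfl, rfl⟩ := hi
      exact absurd hj (hnew rfl j hlt')
    · rfl
  · omega
  · rw [app_lt d a 0 hpos]; exact hφ

/-- P has attacked an assertion `p → q` of O. -/
def StA (p q : ℕ) (d : List Move) : Prop :=
  ∃ i < d.length, i % 2 = 0 ∧ ∃ m < i, d[i]!.ref = some (m, true) ∧
    d[i]!.stmt = .form (.atom p) ∧ d[m]!.stmt = .form (.impl (.atom p) (.atom q))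

/-- So far only `p`, `p → q` were asserted by O, and only the two implications by P. -/
def StB (p q : ℕ) (d : List Move) : Prop :=
  ∀ i < d.length,
    (i % 2 = 1 → d[i]!.stmt = .form (.atom p) ∨
      d[i]!.stmt = .form (.impl (.atom p) (.atom q))) ∧
    (i % 2 = 0 → d[i]!.stmt = .form (.impl (.atom p)
        (.impl (.impl (.atom p) (.atom q)) (.atom q))) ∨
      d[i]!.stmt = .form (.impl (.impl (.atom p) (.atom q)) (.atom q)))

theorem StA.app {p q : ℕ} {d : List Move} (h : StA p q d) (a : Move) : StA p q (d ++ [a]) := by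
  obtain ⟨i, hi, h2, m, hm, r1, r2, r3⟩ := h
  refine ⟨i, by simp; omega, h2, m, hm, ?_⟩
  rw [app_lt d a i hi, app_lt d a m (by omega)]
  exact ⟨r1, r2, r3⟩

theorem step {p q : ℕ} (hpq : p ≠ q) {φ : Formula} {T : Set (List Move)}
    (hT : IsWinningStrategy NRules φ T) (d : List Move) (hd : d ∈ T)
    (hodd : d.length % 2 = 1) (h : StA p q d ∨ StB p q d) :
    ∃ a b : Move, (d ++ [a]) ++ [b] ∈ T ∧
      (StA p q ((d ++ [a]) ++ [b]) ∨ StB p q ((d ++ [a]) ++ [b])) := by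
  have hS := hT.dialogues d hd
  rcases h with hA | hB
  · have hA' := hA
    obtain ⟨i, hi, h2, m, hm, r1, r2, r3⟩ := hA'
    have hx : d ++ [⟨.form (.atom q), some (i, false)⟩] ∈ T := by
      apply hT.even_all_children d hd hodd
      refine extend hS hodd _ i false rfl hi h2 (by simp) ?_ (by simp)
      intro _
      refine ⟨m, _, r1, hm, r3, ?_⟩
      rw [r2]
      exact Defends.impl _ _
    obtain ⟨b, hb, -⟩ := hT.odd_unique_child _ hx (by simp) (by simp; omega)
    exact ⟨_, b, hb, Or.inl ((hA.app _).app b)⟩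
  · -- O attacks the last move
    have hlast := (hB (d.length - 1) (by omega)).2 (by omega)
    obtain ⟨s, ψ, hψ1, hψ2, hψ3, hs⟩ : ∃ (s : Statement) (ψ : Formula),
        d[d.length - 1]!.stmt = .form ψ ∧ ¬ ψ.isAtomic ∧ Attacks s ψ ∧
        (s = .form (.atom p) ∨ s = .form (.impl (.atom p) (.atom q))) := by
      rcases hlast with h | h
      · exact ⟨_, _, h, by simp [Formula.isAtomic], Attacks.impl _ _, Or.inl rfl⟩
      · exact ⟨_, _, h, by simp [Formula.isAtomic], Attacks.impl _ _, Or.inr rfl⟩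
    have hx : d ++ [⟨s, some (d.length - 1, true)⟩] ∈ T := by
      apply hT.even_all_children d hd hodd
      refine extend hS hodd _ (d.length - 1) true rfl (by omega) (by omega)
        (fun _ => ⟨ψ, hψ1, hψ2, hψ3⟩) (by simp) ?_
      intro _ i hi hr
      rcases Nat.eq_zero_or_pos i with rfl | hpos
      · rw [(hS.1.1 hi).1] at hr
        cases hr
      · obtain ⟨m', z', t1, t2, -⟩ := hS.1.2 i hpos hi
        rw [t1] at hr
        simp only [Option.some.injEq, Prod.mk.injEq] at hr
        omega
    obtain ⟨b, hb, -⟩ := hT.odd_unique_child _ hx (by simp) (by simp; omega)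
    refine ⟨_, b, hb, ?_⟩
    generalize ha : (⟨s, some (d.length - 1, true)⟩ : Move) = a at hx hb ⊢
    have has : a.stmt = s := by rw [← ha]
    have hlen : (d ++ [a]).length = d.length + 1 := by simp
    have hB1 : StB p q (d ++ [a]) := by
      intro i hi
      rw [hlen] at hi
      rcases Nat.lt_succ_iff_lt_or_eq.mp hi with hlt | rfl
      · rw [app_lt d a i hlt]; exact hB i hlt
      · rw [app_eq, has]
        exact ⟨fun _ => hs, fun h => by omega⟩
    clear hB hlast hψ1 hψ2 hψ3 hs ha
    generalize d ++ [a] = e at *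
    have hE := hT.dialogues _ hb
    have hlen2 : (e ++ [b]).length = e.length + 1 := by simp
    obtain ⟨⟨-, g1⟩, ⟨g10, -⟩, -⟩ := hE
    obtain ⟨m, z, t1, t2, t3, t4, t5⟩ := g1 e.length (by omega) (by omega)
    rw [app_eq, app_lt e b m t2] at t4
    have hmo := (hB1 m t2).1 (by omega)
    cases z with
    | true =>
      left
      obtain ⟨χ, u1, u2, u3⟩ := t4 rfl
      rcases hmo with h | h
      · rw [h] at u1
        cases u1
        exact absurd trivial u2
      · rw [h] at u1
        cases u1
        refine ⟨e.length, by omega, by omega, m, t2, t1, ?_, ?_⟩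
        · rw [app_eq]
          generalize b.stmt = w at u3
          cases u3
          rfl
        · rw [app_lt e b m t2]; exact h
    | false =>
      right
      obtain ⟨k, χ, u1, u2, u3, u4⟩ := t5 rfl
      rw [app_eq, app_lt e b m t2] at u4
      rw [app_lt e b k (by omega)] at u3
      obtain ⟨m', z', v1, v2, v3, -⟩ := g1 m (by omega) (by omega)
      rw [u1] at v1
      simp only [Option.some.injEq, Prod.mk.injEq] at v1
      have hko := (hB1 k (by omega)).2 (by omega)
      have hbs : b.stmt = .form (.impl (.impl (.atom p) (.atom q)) (.atom q)) := by
        rcases hko with h | h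
        · rw [h] at u3
          cases u3
          generalize b.stmt = w at u4
          generalize e[m]!.stmt = w' at u4
          cases u4
          rfl
        · rw [h] at u3
          cases u3
          have hq : b.stmt = .form (.atom q) := by
            generalize b.stmt = w at u4
            generalize e[m]!.stmt = w' at u4
            cases u4
            rfl
          obtain ⟨j, j1, j2, j3⟩ := g10 e.length (by omega) (by omega) q (by rw [app_eq]; exact hq)
          rw [app_lt e b j j1] at j3
          rcases (hB1 j j1).1 j2 with h | h
          · rw [h] at j3
            cases j3
            exact absurd rfl hpq
          · rw [h] at j3
            cases j3
      intro i hi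
      rw [hlen2] at hi
      rcases Nat.lt_succ_iff_lt_or_eq.mp hi with hlt | rfl
      · rw [app_lt e b i hlt]; exact hB1 i hlt
      · rw [app_eq]
        exact ⟨fun h => by omega, fun _ => Or.inr hbs⟩

/-- The implicational form of modus ponens `p → ((p → q) → q)`,
for distinct atoms `p` and `q`, is not N-valid. -/
theorem implicational_modus_ponens_not_N_valid (p q : ℕ) (hpq : p ≠ q) :
    ¬ NValid (Formula.impl (Formula.atom p)
        (Formula.impl (Formula.impl (Formula.atom p) (Formula.atom q))
          (Formula.atom q))) := by
  rintro ⟨T, hT⟩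
  obtain ⟨d, hd⟩ := hT.nonempty
  have hpos := (hT.dialogues d hd).2.2.1
  have h1T : d.take 1 ∈ T :=
    hT.prefix_closed d hd _ (List.take_prefix 1 d) (by simp; omega)
  have hl1 : (d.take 1).length = 1 := by simp; omega
  have h1B : StB p q (d.take 1) := by
    intro i hi
    have : i = 0 := by omega
    subst this
    exact ⟨fun h => by omega, fun _ => Or.inl (hT.dialogues _ h1T).2.2.2⟩
  let G := {d : List Move // d ∈ T ∧ d.length % 2 = 1 ∧ (StA p q d ∨ StB p q d)}
  have hstep : ∀ g : G, ∃ g' : G, g.1 <+: g'.1 ∧ g.1.length < g'.1.length := by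
    rintro ⟨d, h1, h2, h3⟩
    obtain ⟨a, b, hab, hst⟩ := step hpq hT d h1 h2 h3
    refine ⟨⟨_, hab, by simp; omega, hst⟩, ?_, by simp⟩
    exact ⟨[a, b], by simp⟩
  choose nx hnx1 hnx2 using hstep
  let g : ℕ → G := fun n => Nat.rec ⟨d.take 1, h1T, by omega, Or.inr h1B⟩ (fun _ x => nx x) n
  have hglen : ∀ n, n < (g n).1.length := by
    intro n
    induction n with
    | zero => show 0 < (d.take 1).length; omega
    | succ n ih =>
      have := hnx2 (g n)
      show n + 1 < (nx (g n)).1.length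
      omega
  have hgpre : ∀ n k, (g n).1 <+: (g (n + k)).1 := by
    intro n k
    induction k with
    | zero => exact List.prefix_refl _
    | succ k ih => exact ih.trans (hnx1 (g (n + k)))
  obtain ⟨n, hn, hnot⟩ := hT.no_infinite_branch (fun i => (g i).1[i]'(hglen i))
  apply hnot
  have key : (List.ofFn fun i : Fin n => (g i).1[(i : ℕ)]'(hglen i)) = (g n).1.take n := by
    apply List.ext_getElem
    · have := hglen n
      simp; omega
    · intro i h1 h2
      have hin : i < n := by simpa using h1
      simp only [List.getElem_ofFn, List.getElem_take]
      obtain ⟨k, rfl⟩ := Nat.exists_eq_add_of_lt hin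
      exact (hgpre i (k + 1)).getElem (hglen i)
  rw [key]
  have := hglen n
  exact hT.prefix_closed _ (g n).2.1 _ (List.take_prefix _ _) (by simp; omega)
end
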